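/- arXiv:2605.22553 — 3 statements merged into one kernel-verified Lean document; each statement's English description precedes it below -/
import Mathlib

section
/- Let k ≥ 2 be an integer and let 0 < ε ≤ d/4 with d ∈ (0,1). Let G be a graph on n vertices and let V₁, …, V_ℓ be pairwise disjoint subsets of V(G), each of size L, covering all but at most εn vertices of G, with ℓ ≥ 2(k−1)/d. Let R be the graph on {1, …, ℓ} in which i and j are adjacent if and only if the pair (V_i, V_j) is ε-regular in G with density greater than d. Suppose that for all nonadjacent i, j ∈ V(R), d_R(i) + d_R(j) ≥ 2(1 − 1/k − d − 2ε)·ℓ. Then there exists a collection of pairwise disjoint groups, each group consisting of k of the clusters V_{i₁}, …, V_{i_k} with {i₁, …, i_k} a clique in R (so every pair of clusters in a group is ε-regular with density greater than d), such that the vertices of G not contained in any group number at most 2k²dn. -/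
/-- The pair `(A, B)` is `ε`-regular in `G`. -/
def EpsRegular {V : Type*} (G : SimpleGraph V) [DecidableRel G.Adj]
    (ε : ℝ) (A B : Finset V) : Prop :=
  ∀ X ⊆ A, ∀ Y ⊆ B, ε * A.card < X.card → ε * B.card < Y.card →
    |(G.edgeDensity X Y : ℝ) - (G.edgeDensity A B : ℝ)| < ε

/-- Adjacency in the reduced graph: `i ≠ j` and the pair `(V_i, V_j)` is `ε`-regular
with density greater than `d`. -/
def RedAdj {V : Type*} (G : SimpleGraph V) [DecidableRel G.Adj] (ε d : ℝ)
    {ℓ : ℕ} (P : Fin ℓ → Finset V) (i j : Fin ℓ) : Prop :=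
  i ≠ j ∧ EpsRegular G ε (P i) (P j) ∧ d < (G.edgeDensity (P i) (P j) : ℝ)

/-- Degree of `i` in the reduced graph. -/
noncomputable def redDeg {V : Type*} (G : SimpleGraph V) [DecidableRel G.Adj] (ε d : ℝ)
    {ℓ : ℕ} (P : Fin ℓ → Finset V) (i : Fin ℓ) : ℕ :=
  {j : Fin ℓ | RedAdj G ε d P i j}.ncard

/-! A partition of the vertices of the complement of the reduced graph into `r` independent sets of
size at most `k` is a partition of the clusters into cliques of the reduced graph, and only clusters
in cliques with fewer than `k` members are lost; for `r` slightly larger than `ℓ / k` these are few.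
Such a partition is provided by the theorem of Kierstead and Kostochka, an Ore-type version of the
Hajnal–Szemerédi theorem: `d(x) + d(y) + 2 ≤ 2r` for all adjacent `x`, `y` suffices.

For its proof, colour all vertices but one, `v`, with the largest possible number of accessible
classes, those from which a sequence of single-vertex moves leads to a class with a free place. If
no colouring of all vertices exists, then each vertex of the set `B` of `v` and the inaccessible
classes has a neighbour in each accessible class. It is solo for a class in which it has exactly
one, and a vertex of an accessible class with two nonadjacent solo neighbours would allow a
recolouring with more accessible classes. Discharging from the accessible classes to `B` then gives
`|B| ≤ kq`, where `q` is the number of inaccessible classes, whereas `|B| = kq + 1`. -/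
section Digraph

open Finset

variable {κ : Type*}

/-- `ReachesIn r P T i`: the digraph `r` has a walk from `i` to a vertex satisfying `P` that stays
inside `T`. -/
inductive ReachesIn (r : κ → κ → Prop) (P : κ → Prop) (T : Finset κ) : κ → Prop
  | base {i : κ} (hi : i ∈ T) (hP : P i) : ReachesIn r P T i
  | step {i j : κ} (hi : i ∈ T) (hij : r i j) (hj : ReachesIn r P T j) : ReachesIn r P T i

variable {r r' : κ → κ → Prop} {P P' : κ → Prop} {T T' A : Finset κ} {i U W : κ}

theorem ReachesIn.mem (h : ReachesIn r P T i) : i ∈ T := by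
  cases h <;> assumption

theorem ReachesIn.transport (h : ReachesIn r P T i) (hT : T ⊆ T') (hP : ∀ i ∈ T, P i → P' i)
    (hr : ∀ i ∈ T, ∀ j ∈ T, r i j → r' i j) : ReachesIn r' P' T' i := by
  induction h with
  | base hi h => exact .base (hT hi) (hP _ hi h)
  | step hi hij hj ih => exact .step (hT hi) (hr _ hi _ hj.mem hij) ih

theorem ReachesIn.mono (h : ReachesIn r P T i) (hT : T ⊆ T') : ReachesIn r P T' i :=
  h.transport hT (fun _ _ => id) fun _ _ _ _ => id

open Classical in
theorem ReachesIn.restrict (h : ReachesIn r P T i) :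
    ReachesIn r P {j ∈ T | ReachesIn r P T j} i := by
  induction h with
  | base hi hP => exact .base (mem_filter.2 ⟨hi, .base hi hP⟩) hP
  | step hi hij hj ih => exact .step (mem_filter.2 ⟨hi, .step hi hij hj⟩) hij ih

variable [DecidableEq κ]

/-- Cut a walk at its last visit to `U`. -/
theorem ReachesIn.erase_or (U : κ) (h : ReachesIn r P T i) :
    ReachesIn r P (T.erase U) i ∨
      U ∈ T ∧ (P U ∨ ∃ j, r U j ∧ ReachesIn r P (T.erase U) j) := by
  induction h with
  | @base i hi hP =>
    rcases eq_or_ne i U with rfl | hiU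
    · exact .inr ⟨hi, .inl hP⟩
    · exact .inl (.base (mem_erase.2 ⟨hiU, hi⟩) hP)
  | @step i j hi hij _ ih =>
    rcases ih with hj | hU
    · rcases eq_or_ne i U with rfl | hiU
      · exact .inr ⟨hi, .inr ⟨j, hij, hj⟩⟩
      · exact .inl (.step (mem_erase.2 ⟨hiU, hi⟩) hij hj)
    · exact .inr hU

theorem ReachesIn.base_or_step_erase (h : ReachesIn r P T i) :
    P i ∨ ∃ j, r i j ∧ ReachesIn r P (T.erase i) j :=
  (h.erase_or i).elim (fun hi => absurd hi.mem (notMem_erase i T)) And.right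

open Classical in
/-- The vertices of `A` that can no longer reach `P` inside `A` once `U` is removed. -/
noncomputable def cutOff (r : κ → κ → Prop) (P : κ → Prop) (A : Finset κ) (U : κ) : Finset κ :=
  {X ∈ A.erase U | ¬ ReachesIn r P (A.erase U) X}

theorem mem_cutOff {X : κ} :
    X ∈ cutOff r P A U ↔ (X ≠ U ∧ X ∈ A) ∧ ¬ ReachesIn r P (A.erase U) X := by
  simp only [cutOff, mem_filter, mem_erase]

theorem ReachesIn.erase_of_mem_cutOff (hW : W ∈ cutOff r P A U)
    (h : ReachesIn r P (A.erase U) i) : ReachesIn r P (A.erase W) i := by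
  rcases h.erase_or W with h' | ⟨hWA, h'⟩
  · exact h'.mono (erase_subset_erase _ (erase_subset _ _))
  · refine absurd ?_ (mem_cutOff.1 hW).2
    rcases h' with hP | ⟨j, hij, hj⟩
    · exact .base hWA hP
    · exact .step hWA hij (hj.mono (erase_subset _ _))

theorem cutOff_ssubset (hU : ReachesIn r P A U) (hW : W ∈ cutOff r P A U) :
    cutOff r P A W ⊂ cutOff r P A U := by
  have hWU := (mem_cutOff.1 hW).1
  have hUW : ReachesIn r P (A.erase W) U := by
    have hUmem : U ∈ A.erase W := mem_erase.2 ⟨hWU.1.symm, hU.mem⟩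
    rcases hU.base_or_step_erase with hP | ⟨j, hUj, hj⟩
    · exact .base hUmem hP
    · exact .step hUmem hUj (hj.erase_of_mem_cutOff hW)
  refine (ssubset_iff_of_subset fun X hX => ?_).2
    ⟨W, hW, fun h => (mem_cutOff.1 h).1.1 rfl⟩
  obtain ⟨⟨-, hXA⟩, hXW⟩ := mem_cutOff.1 hX
  refine mem_cutOff.2 ⟨⟨?_, hXA⟩, fun h => hXW (h.erase_of_mem_cutOff hW)⟩
  rintro rfl
  exact hXW hUW

open Classical in
theorem card_outNeighbors_le_card_cutOff (hW : W ∈ cutOff r P A U) :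
    #{X ∈ A.erase W | r W X} ≤ #(cutOff r P A U) := by
  have hWU := mem_cutOff.1 hW
  have hsub : {X ∈ A.erase W | r W X} ⊆ insert U ((cutOff r P A U).erase W) := by
    intro X hX
    obtain ⟨hXA, hWX⟩ := mem_filter.1 hX
    obtain ⟨hXW, hXA⟩ := mem_erase.1 hXA
    rw [mem_insert, mem_erase, mem_cutOff]
    by_cases hXU : X = U
    · exact .inl hXU
    · exact .inr ⟨hXW, ⟨hXU, hXA⟩, fun h => hWU.2 (.step (mem_erase.2 hWU.1) hWX h)⟩
  calc #{X ∈ A.erase W | r W X} ≤ #((cutOff r P A U).erase W) + 1 :=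
        (card_le_card hsub).trans (card_insert_le _ _)
    _ = #(cutOff r P A U) := card_erase_add_one hW

open Classical in
/-- Among the vertices whose removal cuts something off, one cutting off as little as possible
cuts off only vertices whose own removal is harmless. -/
theorem exists_subset_forall_cutOff_eq_empty (hne : A.Nonempty)
    (hA : ∀ X ∈ A, ReachesIn r P A X) :
    ∃ A' ⊆ A, A'.Nonempty ∧ ∀ W ∈ A', cutOff r P A W = ∅ ∧
      #{X ∈ A.erase W | r W X} ≤ #A' := by
  by_cases hall : ∀ U ∈ A, cutOff r P A U = ∅
  · exact ⟨A, Subset.rfl, hne, fun W hW => ⟨hall W hW,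
      card_le_card ((filter_subset _ _).trans (erase_subset _ _))⟩⟩
  push Not at hall
  obtain ⟨U₀, hU₀, hcut₀⟩ := hall
  obtain ⟨U, hU, hmin⟩ := exists_min_image {U ∈ A | (cutOff r P A U).Nonempty}
    (fun U => #(cutOff r P A U)) ⟨U₀, mem_filter.2 ⟨hU₀, hcut₀⟩⟩
  obtain ⟨hUA, hUne⟩ := mem_filter.1 hU
  refine ⟨cutOff r P A U, (filter_subset _ _).trans (erase_subset _ _), hUne,
    fun W hW => ⟨?_, card_outNeighbors_le_card_cutOff hW⟩⟩
  by_contra hcut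
  exact (card_lt_card (cutOff_ssubset (hA U hUA) hW)).not_ge
    (hmin W (mem_filter.2 ⟨(mem_cutOff.1 hW).1.2, nonempty_iff_ne_empty.2 hcut⟩))

end Digraph

section DegIn

open Finset

variable {V κ : Type*} {G : SimpleGraph V} {T T' : Finset V} {x v u : V}

open Classical in
/-- The neighbours of `x` inside `T`. -/
noncomputable def nbrsIn (G : SimpleGraph V) (T : Finset V) (x : V) : Finset V :=
  {v ∈ T | G.Adj x v}

/-- The number of neighbours of `x` inside `T`. -/
noncomputable def degIn (G : SimpleGraph V) (T : Finset V) (x : V) : ℕ := #(nbrsIn G T x)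

open Classical in
theorem mem_nbrsIn : v ∈ nbrsIn G T x ↔ v ∈ T ∧ G.Adj x v := mem_filter

theorem degIn_eq_zero : degIn G T x = 0 ↔ ∀ v ∈ T, ¬ G.Adj x v := by
  simp only [degIn, nbrsIn, card_eq_zero, filter_eq_empty_iff]

theorem degIn_pos : 0 < degIn G T x ↔ ∃ v ∈ T, G.Adj x v := by
  simp only [degIn, card_pos, Finset.Nonempty, mem_nbrsIn]

theorem degIn_mono (h : T ⊆ T') (x : V) : degIn G T x ≤ degIn G T' x :=
  card_le_card fun _ hv => mem_nbrsIn.2 ⟨h (mem_nbrsIn.1 hv).1, (mem_nbrsIn.1 hv).2⟩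

theorem eq_of_degIn_eq_one (h : degIn G T x = 1) (hu : u ∈ T) (hxu : G.Adj x u)
    (hv : v ∈ T) (hxv : G.Adj x v) : u = v :=
  card_le_one.1 h.le u (mem_nbrsIn.2 ⟨hu, hxu⟩) v (mem_nbrsIn.2 ⟨hv, hxv⟩)

open Classical in
theorem degIn_univ [Fintype V] (x : V) : degIn G univ x = G.degree x := by
  rw [degIn, nbrsIn, ← G.neighborFinset_eq_filter, G.card_neighborFinset_eq_degree]

variable [DecidableEq V]

open Classical in
theorem degIn_union (h : Disjoint T T') (x : V) :
    degIn G (T ∪ T') x = degIn G T x + degIn G T' x := by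
  rw [degIn, nbrsIn, filter_union, card_union_of_disjoint (disjoint_filter_filter h)]
  rfl

open Classical in
theorem degIn_biUnion {C : Finset κ} {F : κ → Finset V} (h : (C : Set κ).PairwiseDisjoint F)
    (x : V) : degIn G (C.biUnion F) x = ∑ i ∈ C, degIn G (F i) x := by
  rw [degIn, nbrsIn, filter_biUnion, card_biUnion]
  · rfl
  · exact fun i hi j hj hij => disjoint_filter_filter (h hi hj hij)

theorem degIn_erase_eq_zero (h : degIn G T x = 1) (hv : v ∈ T) (hxv : G.Adj x v) :
    degIn G (T.erase v) x = 0 :=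
  degIn_eq_zero.2 fun _ hu hxu =>
    (mem_erase.1 hu).1 (eq_of_degIn_eq_one h (mem_erase.1 hu).2 hxu hv hxv)

theorem isIndepSet_insert (hT : G.IsIndepSet (T : Set V)) (hx : degIn G T x = 0) :
    G.IsIndepSet (insert x T : Finset V) := by
  rw [coe_insert, SimpleGraph.isIndepSet_iff, Set.pairwise_insert]
  refine ⟨hT, fun u hu _ => ⟨degIn_eq_zero.1 hx u hu, fun hux => ?_⟩⟩
  exact degIn_eq_zero.1 hx u hu hux.symm

end DegIn

section BoundedColoring

open Finset

variable {V κ : Type*} {G : SimpleGraph V} {k : ℕ} {S S₁ S₂ : Finset V} {C C₁ C₂ : Finset κ}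
  {F F₁ F₂ : κ → Finset V} {i : κ}

/-- Some vertex of class `i` may be moved to class `j`. -/
def Movable (G : SimpleGraph V) (F : κ → Finset V) (i j : κ) : Prop :=
  ∃ v ∈ F i, degIn G (F j) v = 0

/-- Inside the colour set `T`, a sequence of single-vertex moves leads from class `i` to a class
with fewer than `k` vertices. -/
abbrev Accessible (G : SimpleGraph V) (k : ℕ) (F : κ → Finset V) (T : Finset κ) : κ → Prop :=
  ReachesIn (Movable G F) (fun i => #(F i) < k) T

variable [DecidableEq V]

/-- The sets `F i`, for `i` in the colour set `C`, are the classes of a proper colouring of the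
vertices in `S` by classes of size at most `k`; the values of `F` outside `C` are irrelevant. -/
structure IsBoundedColoring (G : SimpleGraph V) (k : ℕ) (S : Finset V) (C : Finset κ)
    (F : κ → Finset V) : Prop where
  biUnion_eq : C.biUnion F = S
  pairwiseDisjoint : (C : Set κ).PairwiseDisjoint F
  isIndepSet : ∀ i ∈ C, G.IsIndepSet (F i : Set V)
  card_le : ∀ i ∈ C, #(F i) ≤ k

/-- The vertices in `S` have a proper colouring with colours in `C` and classes of size at
most `k`. -/
def BoundedColorable (G : SimpleGraph V) (k : ℕ) (S : Finset V) (C : Finset κ) : Prop :=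
  ∃ F, IsBoundedColoring G k S C F

theorem card_insert_erase_le {T : Finset V} {x v : V} (hv : v ∈ T) :
    #(insert x (T.erase v)) ≤ #T :=
  (card_insert_le _ _).trans_eq (card_erase_add_one hv)

theorem boundedColorable_empty (G : SimpleGraph V) (k : ℕ) (C : Finset κ) :
    BoundedColorable G k ∅ C :=
  ⟨fun _ => ∅, by ext; simp, fun _ _ _ _ _ => disjoint_empty_left _, by simp, by simp⟩

theorem IsBoundedColoring.subset (h : IsBoundedColoring G k S C F) (hi : i ∈ C) : F i ⊆ S :=
  h.biUnion_eq ▸ subset_biUnion_of_mem F hi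

theorem IsBoundedColoring.restrict (h : IsBoundedColoring G k S C F) (hC : C₁ ⊆ C) :
    IsBoundedColoring G k (C₁.biUnion F) C₁ F :=
  ⟨rfl, h.pairwiseDisjoint.subset (coe_subset.2 hC), fun i hi => h.isIndepSet i (hC hi),
    fun i hi => h.card_le i (hC hi)⟩

theorem IsBoundedColoring.biUnion_eq_class_union [DecidableEq κ]
    (h : IsBoundedColoring G k S C F) (hi : i ∈ C) :
    S = F i ∪ (C.erase i).biUnion F := by
  rw [← h.biUnion_eq, ← biUnion_insert, insert_erase hi]

theorem IsBoundedColoring.disjoint_class [DecidableEq κ]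
    (h : IsBoundedColoring G k S C F) (hi : i ∈ C) :
    Disjoint (F i) ((C.erase i).biUnion F) :=
  (disjoint_biUnion_right _ _ _).2 fun _ hj =>
    h.pairwiseDisjoint hi (mem_erase.1 hj).2 (mem_erase.1 hj).1.symm

theorem IsBoundedColoring.isIndepSet_swap {y z : V} (h : IsBoundedColoring G k S C F) (hi : i ∈ C)
    (hz : z ∈ F i) (hyz : G.Adj y z) (hy : degIn G (F i) y = 1) :
    G.IsIndepSet (insert y ((F i).erase z) : Finset V) :=
  isIndepSet_insert ((h.isIndepSet i hi).mono (coe_subset.2 (erase_subset _ _)))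
    (degIn_erase_eq_zero hy hz hyz)

theorem IsBoundedColoring.mono (h : IsBoundedColoring G k S C F) (hS : S₁ ⊆ S) :
    IsBoundedColoring G k S₁ C fun i => F i ∩ S₁ where
  biUnion_eq := by rw [← biUnion_inter, h.biUnion_eq, inter_eq_right.2 hS]
  pairwiseDisjoint := fun _ hi _ hj hij =>
    (h.pairwiseDisjoint hi hj hij).mono inter_subset_left inter_subset_left
  isIndepSet i hi := (h.isIndepSet i hi).mono (coe_subset.2 inter_subset_left)
  card_le i hi := (card_le_card inter_subset_left).trans (h.card_le i hi)

theorem isBoundedColoring_singleton {T : Finset V} (hT : G.IsIndepSet (T : Set V))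
    (hk : #T ≤ k) (i : κ) : IsBoundedColoring G k T {i} fun _ => T :=
  ⟨singleton_biUnion, by simp, fun _ _ => hT, fun _ _ => hk⟩

theorem IsBoundedColoring.union [DecidableEq κ] (h₁ : IsBoundedColoring G k S₁ C₁ F₁)
    (h₂ : IsBoundedColoring G k S₂ C₂ F₂) (hC : Disjoint C₁ C₂) (hS : Disjoint S₁ S₂) :
    IsBoundedColoring G k (S₁ ∪ S₂) (C₁ ∪ C₂) (C₁.piecewise F₁ F₂) := by
  have hF₁ : ∀ i ∈ C₁, C₁.piecewise F₁ F₂ i = F₁ i := fun i hi => piecewise_eq_of_mem _ _ _ hi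
  have hF₂ : ∀ i ∈ C₂, C₁.piecewise F₁ F₂ i = F₂ i := fun i hi =>
    piecewise_eq_of_notMem _ _ _ (disjoint_right.1 hC hi)
  refine ⟨?_, ?_, ?_, ?_⟩
  · rw [union_biUnion, biUnion_congr rfl hF₁, biUnion_congr rfl hF₂, h₁.biUnion_eq, h₂.biUnion_eq]
  · rw [coe_union, Set.pairwiseDisjoint_union]
    refine ⟨?_, ?_, fun i hi j hj _ => ?_⟩
    · exact fun i hi j hj hij => by
        simpa only [Function.onFun, hF₁ i hi, hF₁ j hj] using h₁.pairwiseDisjoint hi hj hij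
    · exact fun i hi j hj hij => by
        simpa only [Function.onFun, hF₂ i hi, hF₂ j hj] using h₂.pairwiseDisjoint hi hj hij
    · rw [hF₁ i hi, hF₂ j hj]
      exact hS.mono (h₁.subset hi) (h₂.subset hj)
  · intro i hi
    rcases mem_union.1 hi with hi | hi
    · exact hF₁ i hi ▸ h₁.isIndepSet i hi
    · exact hF₂ i hi ▸ h₂.isIndepSet i hi
  · intro i hi
    rcases mem_union.1 hi with hi | hi
    · exact hF₁ i hi ▸ h₁.card_le i hi
    · exact hF₂ i hi ▸ h₂.card_le i hi

theorem IsBoundedColoring.update_class [DecidableEq κ] {T : Finset V}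
    (h : IsBoundedColoring G k S C F) (hi : i ∈ C) (hT : G.IsIndepSet (T : Set V)) (hk : #T ≤ k)
    (hdisj : Disjoint T ((C.erase i).biUnion F)) :
    IsBoundedColoring G k (T ∪ (C.erase i).biUnion F) C (Function.update F i T) := by
  have h' := (isBoundedColoring_singleton hT hk i).union (h.restrict (erase_subset i C))
    (disjoint_singleton_left.2 (notMem_erase i C)) hdisj
  rwa [← insert_eq, insert_erase hi, piecewise_singleton] at h'

theorem BoundedColorable.union [DecidableEq κ] (h₁ : BoundedColorable G k S₁ C₁)
    (h₂ : BoundedColorable G k S₂ C₂) (hC : Disjoint C₁ C₂) (hS : S ⊆ S₁ ∪ S₂) :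
    BoundedColorable G k S (C₁ ∪ C₂) := by
  obtain ⟨F₁, h₁⟩ := h₁
  obtain ⟨F₂, h₂⟩ := h₂
  have h := h₁.union (h₂.mono (sdiff_subset : S₂ \ S₁ ⊆ S₂)) hC disjoint_sdiff
  exact ⟨_, h.mono (hS.trans union_sdiff_self_eq_union.ge)⟩

theorem BoundedColorable.union_class [DecidableEq κ] {T : Finset V}
    (h : BoundedColorable G k S₁ (C.erase i)) (hi : i ∈ C) (hT : G.IsIndepSet (T : Set V))
    (hk : #T ≤ k) (hS : S ⊆ S₁ ∪ T) :
    BoundedColorable G k S C := by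
  have hunion := h.union ⟨_, isBoundedColoring_singleton hT hk i⟩
    (disjoint_singleton_right.2 (notMem_erase i C)) hS
  rwa [union_comm, ← insert_eq, insert_erase hi] at hunion

/-- Put `x` into class `i`, and make room for it by shifting vertices along a path of moves. -/
theorem IsBoundedColoring.insert_of_accessible (h : IsBoundedColoring G k S C F)
    (hi : Accessible G k F C i) {x : V} (hx : degIn G (F i) x = 0) :
    BoundedColorable G k (insert x S) C := by
  classical
  induction C using Finset.strongInduction generalizing S i x with
  | H C ih =>
  have hrest := h.restrict (erase_subset i C)
  have hS : S = (C.erase i).biUnion F ∪ F i :=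
    (h.biUnion_eq_class_union hi.mem).trans (union_comm _ _)
  have hindep := h.isIndepSet i hi.mem
  rcases hi.base_or_step_erase with hlt | ⟨j, ⟨v, hv, hvj⟩, hj⟩
  · refine BoundedColorable.union_class ⟨F, hrest⟩ hi.mem (isIndepSet_insert hindep hx)
      ((card_insert_le _ _).trans hlt) ?_
    rw [hS, union_insert]
  · have hx' : degIn G ((F i).erase v) x = 0 :=
      Nat.eq_zero_of_le_zero ((degIn_mono (erase_subset v _) x).trans hx.le)
    have hindep' : G.IsIndepSet ((F i).erase v : Set V) := by
      exact hindep.mono (coe_subset.2 (erase_subset v (F i)))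
    refine (ih _ (erase_ssubset hi.mem) hrest hj hvj).union_class hi.mem
      (isIndepSet_insert hindep' hx')
      ((card_insert_erase_le hv).trans (h.card_le i hi.mem)) ?_
    rw [hS]
    intro u
    simp only [mem_union, mem_insert, mem_erase]
    tauto

end BoundedColoring

section Ore

open Finset

variable {V : Type*} {G : SimpleGraph V} {m : ℕ} {S T : Finset V}

/-- The Ore-type degree condition for colouring `S` with `m` colours: the degrees within `S` of two
adjacent vertices sum to at most `2 * m - 2`. -/
def OreOn (G : SimpleGraph V) (m : ℕ) (S : Finset V) : Prop :=
  ∀ x ∈ S, ∀ y ∈ S, G.Adj x y → degIn G S x + degIn G S y + 2 ≤ 2 * m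

theorem OreOn.mono (h : OreOn G m S) (hT : T ⊆ S) : OreOn G m T := fun x hx y hy hxy =>
  (add_le_add_left (add_le_add (degIn_mono hT x) (degIn_mono hT y)) 2).trans
    (h x (hT hx) y (hT hy) hxy)

open Classical in
theorem oreOn_compl_univ [Fintype V] {m : ℕ}
    (h : ∀ x y, x ≠ y → ¬ G.Adj x y →
      2 * Fintype.card V ≤ G.degree x + G.degree y + 2 * m) :
    OreOn Gᶜ m univ := by
  intro x _ y _ hxy
  have hOre := h x y hxy.1 hxy.2
  have hx := G.degree_lt_card_verts x
  have hy := G.degree_lt_card_verts y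
  rw [degIn_univ, degIn_univ, G.degree_compl, G.degree_compl]
  omega

end Ore

section Stuck

open Finset

variable {V κ : Type*} {G : SimpleGraph V} {k : ℕ} {S : Finset V} {C : Finset κ}
  {F F₀ : κ → Finset V} {v x y y' z : V} {i W X : κ}

open Classical in
/-- The set of colours in `C` whose classes are accessible. -/
noncomputable def accessibleColors (G : SimpleGraph V) (k : ℕ) (F : κ → Finset V)
    (C : Finset κ) : Finset κ :=
  {i ∈ C | Accessible G k F C i}

open Classical in
theorem mem_accessibleColors : i ∈ accessibleColors G k F C ↔ Accessible G k F C i := by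
  simp only [accessibleColors, mem_filter, and_iff_right_iff_imp]
  exact ReachesIn.mem

open Classical in
theorem accessibleColors_subset : accessibleColors G k F C ⊆ C := filter_subset _ _

open Classical in
theorem accessible_accessibleColors (hi : i ∈ accessibleColors G k F C) :
    Accessible G k F (accessibleColors G k F C) i :=
  (mem_accessibleColors.1 hi).restrict

theorem IsBoundedColoring.accessibleColors_nonempty [DecidableEq V]
    (h : IsBoundedColoring G k S C F) (hS : #S < k * #C) : (accessibleColors G k F C).Nonempty := by
  rw [← h.biUnion_eq, card_biUnion fun i hi j hj => h.pairwiseDisjoint hi hj, mul_comm,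
    ← smul_eq_mul, ← sum_const] at hS
  obtain ⟨i, hi, hlt⟩ := exists_lt_of_sum_lt hS
  exact ⟨i, mem_accessibleColors.2 (.base hi hlt)⟩

variable [DecidableEq κ]

theorem card_sdiff_accessibleColors :
    #(C \ accessibleColors G k F C) + #(accessibleColors G k F C) = #C :=
  card_sdiff_add_card_eq_card accessibleColors_subset

variable [DecidableEq V]

/-- The vertex `v` left uncoloured by `F`, together with the vertices in inaccessible classes. -/
noncomputable def outerVertices (G : SimpleGraph V) (k : ℕ) (F : κ → Finset V) (C : Finset κ)
    (v : V) : Finset V :=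
  insert v ((C \ accessibleColors G k F C).biUnion F)

/-- `F` is a colouring of `S` without `v`, and no colouring of the whole of `S` exists. -/
structure IsStuck (G : SimpleGraph V) (k : ℕ) (S : Finset V) (C : Finset κ)
    (F : κ → Finset V) (v : V) : Prop where
  mem : v ∈ S
  isBoundedColoring : IsBoundedColoring G k (S.erase v) C F
  not_boundedColorable : ¬ BoundedColorable G k S C

local notation "𝒜" => accessibleColors G k F C
local notation "ℬ" => outerVertices G k F C v

theorem IsStuck.degIn_pos (h : IsStuck G k S C F v) (hy : y ∈ ℬ) (hi : i ∈ 𝒜) :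
    0 < degIn G (F i) y := by
  have hacc := mem_accessibleColors.1 hi
  by_contra h0
  have h0 := Nat.eq_zero_of_not_pos h0
  rcases mem_insert.1 hy with rfl | hy
  · exact h.not_boundedColorable
      (insert_erase h.mem ▸ h.isBoundedColoring.insert_of_accessible hacc h0)
  · obtain ⟨j, hj, hyj⟩ := mem_biUnion.1 hy
    obtain ⟨hjC, hj⟩ := mem_sdiff.1 hj
    exact hj (mem_accessibleColors.2 (.step hjC ⟨y, hyj, h0⟩ hacc))

theorem IsStuck.card_outerVertices (h : IsStuck G k S C F v) :
    #ℬ = k * #(C \ 𝒜) + 1 := by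
  have hcol := h.isBoundedColoring.restrict (sdiff_subset : C \ 𝒜 ⊆ C)
  have hv : v ∉ (C \ 𝒜).biUnion F := fun hv =>
    notMem_erase v S (h.isBoundedColoring.biUnion_eq ▸ biUnion_subset_biUnion_of_subset_left F
      sdiff_subset hv)
  have hfull : ∀ i ∈ C \ 𝒜, #(F i) = k := fun i hi =>
    (hcol.card_le i hi).antisymm <| not_lt.1 fun hlt =>
      (mem_sdiff.1 hi).2 (mem_accessibleColors.2 (.base (mem_sdiff.1 hi).1 hlt))
  rw [outerVertices, card_insert_of_notMem hv,
    card_biUnion fun i hi j hj => hcol.pairwiseDisjoint hi hj, sum_congr rfl hfull, sum_const,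
    smul_eq_mul, mul_comm]

theorem IsStuck.biUnion_union_outerVertices (h : IsStuck G k S C F v) :
    (𝒜).biUnion F ∪ ℬ = S := by
  rw [outerVertices, union_insert, ← union_biUnion, union_sdiff_of_subset accessibleColors_subset,
    h.isBoundedColoring.biUnion_eq, insert_erase h.mem]

theorem IsStuck.disjoint_outerVertices (h : IsStuck G k S C F v) (hi : i ∈ 𝒜) :
    Disjoint (F i) ℬ := by
  have hiC := accessibleColors_subset hi
  rw [outerVertices, disjoint_insert_right, disjoint_biUnion_right]
  refine ⟨fun hv => notMem_erase v S (h.isBoundedColoring.subset hiC hv), fun j hj => ?_⟩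
  obtain ⟨hjC, hj⟩ := mem_sdiff.1 hj
  exact h.isBoundedColoring.pairwiseDisjoint hiC hjC (ne_of_mem_of_not_mem hi hj)

theorem IsStuck.outerVertices_subset (h : IsStuck G k S C F v) : ℬ ⊆ S :=
  subset_union_right.trans_eq h.biUnion_union_outerVertices

theorem IsStuck.degIn_eq (h : IsStuck G k S C F v) (x : V) :
    degIn G S x = ∑ i ∈ 𝒜, degIn G (F i) x + degIn G ℬ x := by
  have hcol := h.isBoundedColoring.restrict (accessibleColors_subset : 𝒜 ⊆ C)
  conv_lhs => rw [← h.biUnion_union_outerVertices]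
  rw [degIn_union ((disjoint_biUnion_left _ _ _).2 fun i hi => h.disjoint_outerVertices hi),
    degIn_biUnion hcol.pairwiseDisjoint]

theorem IsStuck.degIn_outerVertices_add_card_le (h : IsStuck G k S C F v) (hy : y ∈ ℬ) :
    degIn G ℬ y + #𝒜 ≤ degIn G S y := by
  have hle : #𝒜 ≤ ∑ i ∈ 𝒜, degIn G (F i) y :=
    (card_eq_sum_ones _).trans_le (sum_le_sum fun i hi => h.degIn_pos hy hi)
  rw [h.degIn_eq y]
  omega

theorem IsStuck.oreOn_outerVertices (h : IsStuck G k S C F v) (hOre : OreOn G #C S) :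
    OreOn G #(C \ 𝒜) ℬ := by
  intro x hx y hy hxy
  have hS := hOre x (h.outerVertices_subset hx) y (h.outerVertices_subset hy) hxy
  have hx' := h.degIn_outerVertices_add_card_le hx
  have hy' := h.degIn_outerVertices_add_card_le hy
  have hC := card_sdiff_accessibleColors (G := G) (k := k) (F := F) (C := C)
  omega

/-- Otherwise `z` could be moved to class `X`, making room for `y` in class `W`. -/
theorem IsStuck.degIn_pos_of_solo (h : IsStuck G k S C F v) (hW : W ∈ 𝒜)
    (hcut : cutOff (Movable G F) (fun i => #(F i) < k) 𝒜 W = ∅) (hz : z ∈ F W) (hyz : G.Adj y z)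
    (hsolo : degIn G (F W) y = 1) (hB : BoundedColorable G k ((ℬ).erase y) (C \ 𝒜))
    (hX : X ∈ 𝒜) (hXW : X ≠ W) : 0 < degIn G (F X) z := by
  by_contra h0
  have hcol := h.isBoundedColoring.restrict (accessibleColors_subset : 𝒜 ⊆ C)
  have hacc : Accessible G k F ((𝒜).erase W) X := by
    by_contra hnot
    exact notMem_empty X (hcut ▸ mem_cutOff.2 ⟨⟨hXW, hX⟩, hnot⟩)
  have hinner : BoundedColorable G k (insert z (((𝒜).erase W).biUnion F) ∪
      insert y ((F W).erase z)) 𝒜 :=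
    ((hcol.restrict (erase_subset W _)).insert_of_accessible hacc
      (Nat.eq_zero_of_not_pos h0)).union_class hW (hcol.isIndepSet_swap hW hz hyz hsolo)
      ((card_insert_erase_le hz).trans (hcol.card_le W hW)) Subset.rfl
  have hall := hinner.union hB disjoint_sdiff
    (S := S) (fun u hu => by
      rw [← h.biUnion_union_outerVertices, hcol.biUnion_eq_class_union hW] at hu
      simp only [mem_union, mem_insert, mem_erase] at hu ⊢
      tauto)
  rw [union_sdiff_of_subset accessibleColors_subset] at hall
  exact h.not_boundedColorable hall

/-- Starting from `F`, swap `y` for `z` in class `W` and recolour the inaccessible classes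
according to `F₀`. -/
noncomputable def swapColoring (G : SimpleGraph V) (k : ℕ) (F F₀ : κ → Finset V) (C : Finset κ)
    (W : κ) (y z : V) : κ → Finset V :=
  (accessibleColors G k F C).piecewise (Function.update F W (insert y ((F W).erase z))) F₀

local notation "ℱ" => swapColoring G k F F₀ C W y z

theorem swapColoring_self (hW : W ∈ 𝒜) : ℱ W = insert y ((F W).erase z) := by
  rw [swapColoring, piecewise_eq_of_mem _ _ _ hW, Function.update_self]

theorem swapColoring_of_mem (hX : X ∈ 𝒜) (hXW : X ≠ W) : ℱ X = F X := by
  rw [swapColoring, piecewise_eq_of_mem _ _ _ hX, Function.update_of_ne hXW]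

theorem swapColoring_of_notMem (hX : X ∉ 𝒜) : ℱ X = F₀ X :=
  piecewise_eq_of_notMem _ _ _ hX

theorem IsStuck.isStuck_swapColoring (h : IsStuck G k S C F v) (hW : W ∈ 𝒜) (hz : z ∈ F W)
    (hy : y ∈ ℬ) (hyz : G.Adj y z) (hsolo : degIn G (F W) y = 1)
    (hF₀ : IsBoundedColoring G k ((ℬ).erase y) (C \ 𝒜) F₀) : IsStuck G k S C ℱ z := by
  have hcol := h.isBoundedColoring.restrict (accessibleColors_subset : 𝒜 ⊆ C)
  have hS := h.biUnion_union_outerVertices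
  have hdisj : Disjoint ((𝒜).biUnion F) ℬ :=
    (disjoint_biUnion_left _ _ _).2 fun i hi => h.disjoint_outerVertices hi
  have hclass := hcol.disjoint_class hW
  rw [hcol.biUnion_eq_class_union hW] at hS hdisj
  have hinner := hcol.update_class hW (hcol.isIndepSet_swap hW hz hyz hsolo)
    ((card_insert_erase_le hz).trans (hcol.card_le W hW)) (by grind [disjoint_left])
  have hall := hinner.union hF₀ disjoint_sdiff (by grind [disjoint_left])
  have hunion : insert y ((F W).erase z) ∪ ((𝒜).erase W).biUnion F ∪ (ℬ).erase y = S.erase z := by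
    grind [disjoint_left]
  rw [union_sdiff_of_subset accessibleColors_subset, hunion] at hall
  exact ⟨hS ▸ mem_union_left _ (mem_union_left _ hz), hall, h.not_boundedColorable⟩

theorem accessible_swapColoring (hW : W ∈ 𝒜)
    (hcut : cutOff (Movable G F) (fun i => #(F i) < k) 𝒜 W = ∅) (hz : z ∈ F W)
    (hdeg : ∀ X ∈ 𝒜, X ≠ W → 0 < degIn G (F X) z) (hX : X ∈ 𝒜) :
    Accessible G k ℱ C X := by
  have heq : ∀ X ∈ (𝒜).erase W, ℱ X = F X := fun X hX =>
    swapColoring_of_mem (mem_erase.1 hX).2 (mem_erase.1 hX).1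
  have hrest : ∀ X, Accessible G k F ((𝒜).erase W) X → Accessible G k ℱ C X := fun X hX =>
    hX.transport ((erase_subset _ _).trans accessibleColors_subset)
      (fun i hi hlt => (heq i hi).symm ▸ hlt)
      fun i hi j hj => by simp only [Movable, heq i hi, heq j hj, imp_self]
  rcases ne_or_eq X W with hXW | rfl
  · refine hrest X (by_contra fun hnot => ?_)
    exact notMem_empty X (hcut ▸ mem_cutOff.2 ⟨⟨hXW, hX⟩, hnot⟩)
  have hXC := accessibleColors_subset hX
  rcases (accessible_accessibleColors hX).base_or_step_erase with hlt | ⟨j, ⟨u, hu, huj⟩, hj⟩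
  · refine .base hXC ?_
    rw [swapColoring_self hX]
    exact (card_insert_erase_le hz).trans_lt hlt
  · have hjW := mem_erase.1 hj.mem
    have huz : u ≠ z := by
      rintro rfl
      exact (hdeg j hjW.2 hjW.1).ne' huj
    refine .step hXC ⟨u, ?_, ?_⟩ (hrest j hj)
    · rw [swapColoring_self hX]
      exact mem_insert_of_mem (mem_erase.2 ⟨huz, hu⟩)
    · rwa [heq j hj.mem]

/-- Swapping `y` for its only neighbour `z` in class `W` leaves `z` uncoloured, keeps all accessible
classes accessible, and lets `y'` move into class `W`. -/
theorem IsStuck.exists_larger_of_solo_pair (h : IsStuck G k S C F v) (hW : W ∈ 𝒜)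
    (hcut : cutOff (Movable G F) (fun i => #(F i) < k) 𝒜 W = ∅) (hz : z ∈ F W)
    (hy : y ∈ ℬ) (hyz : G.Adj y z) (hsolo : degIn G (F W) y = 1)
    (hy' : y' ∈ ℬ) (hyz' : G.Adj y' z) (hsolo' : degIn G (F W) y' = 1)
    (hne : y ≠ y') (hyy' : ¬ G.Adj y y')
    (hB : BoundedColorable G k ((ℬ).erase y) (C \ 𝒜)) :
    ∃ F₁, IsStuck G k S C F₁ z ∧ #𝒜 < #(accessibleColors G k F₁ C) := by
  have hdeg := fun X hX hXW => h.degIn_pos_of_solo hW hcut hz hyz hsolo hB (X := X) hX hXW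
  obtain ⟨F₀, hF₀⟩ := hB
  refine ⟨swapColoring G k F F₀ C W y z, h.isStuck_swapColoring hW hz hy hyz hsolo hF₀,
    card_lt_card ?_⟩
  have hacc : ∀ X ∈ 𝒜, Accessible G k (swapColoring G k F F₀ C W y z) C X := fun X hX =>
    accessible_swapColoring hW hcut hz hdeg hX
  obtain ⟨j, hj, hy'j⟩ := mem_biUnion.1
    (hF₀.biUnion_eq.ge (mem_erase.2 ⟨hne.symm, hy'⟩))
  obtain ⟨hjC, hj⟩ := mem_sdiff.1 hj
  refine (ssubset_iff_of_subset fun X hX => mem_accessibleColors.2 (hacc X hX)).2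
    ⟨j, mem_accessibleColors.2 (.step hjC ⟨y', ?_, ?_⟩ (hacc W hW)), hj⟩
  · rwa [swapColoring_of_notMem hj]
  · rw [swapColoring_self hW, degIn_eq_zero]
    refine forall_mem_insert _ _ _ |>.2 ⟨fun hadj => hyy' hadj.symm, ?_⟩
    exact degIn_eq_zero.1 (degIn_erase_eq_zero hsolo' hz hyz')

end Stuck

section Discharging

open Finset

variable {V κ : Type*} {G : SimpleGraph V} {B T : Finset V} {q k : ℕ} {x y : V} {A : Finset κ}
  {F : κ → Finset V} {e : V → ℕ}

/-- Some neighbour of `x` in `B` is a *solo* vertex for `T`, that is, it has only one neighbour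
in `T`. This is meant for `x ∈ T`, which is then that only neighbour. -/
def HasSoloNeighbor (G : SimpleGraph V) (B T : Finset V) (x : V) : Prop :=
  ∃ y ∈ B, G.Adj x y ∧ degIn G T y = 1

open Classical in
/-- The charge sent from `x ∈ T` to its neighbour `y ∈ B`. A vertex with solo neighbours gives the
basic amount `1 / (2 * q)` to every neighbour, and shares the rest of its unit charge out among its
solo neighbours. -/
noncomputable def charge (G : SimpleGraph V) (B T : Finset V) (q : ℕ) (x y : V) : ℝ :=
  if HasSoloNeighbor G B T x then
    1 / (2 * q) +
      if degIn G T y = 1 then (1 - (degIn G B x : ℝ) / (2 * q)) / (degIn G B y + 1) else (0 : ℝ)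
  else 1 / max (degIn G B x : ℝ) (2 * q)

theorem card_le_degIn_add_one_of_isClique {Q : Finset V} (hQ : G.IsClique (Q : Set V))
    (hQB : Q ⊆ B) (hy : y ∈ Q) : #Q ≤ degIn G B y + 1 := by
  classical
  rw [← card_erase_add_one hy]
  refine Nat.add_le_add_right (card_le_card fun u hu => ?_) 1
  obtain ⟨huy, hu⟩ := mem_erase.1 hu
  exact mem_nbrsIn.2 ⟨hQB hu, hQ hy hu huy.symm⟩

theorem sum_charge_le_one (hq : 0 < q)
    (hdeg : HasSoloNeighbor G B T x → degIn G B x ≤ 2 * q)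
    (hclique : G.IsClique {y | y ∈ B ∧ G.Adj x y ∧ degIn G T y = 1}) :
    ∑ y ∈ nbrsIn G B x, charge G B T q x y ≤ 1 := by
  have hq' : (0 : ℝ) < 2 * q := by positivity
  by_cases hx : HasSoloNeighbor G B T x
  · set Q := {y ∈ nbrsIn G B x | degIn G T y = 1} with hQ
    have hmem : ∀ {y}, y ∈ Q ↔ y ∈ B ∧ G.Adj x y ∧ degIn G T y = 1 := by
      simp only [hQ, mem_filter, mem_nbrsIn, and_assoc, implies_true]
    have hrest : 0 ≤ 1 - (degIn G B x : ℝ) / (2 * q) :=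
      sub_nonneg.2 (div_le_one_of_le₀ (by exact_mod_cast hdeg hx) hq'.le)
    have hQpos : (0 : ℝ) < #Q := by
      obtain ⟨y, hy⟩ := hx
      exact_mod_cast card_pos.2 ⟨y, hmem.2 hy⟩
    have hshare : ∀ y ∈ Q, (1 - (degIn G B x : ℝ) / (2 * q)) / (degIn G B y + 1) ≤
        (1 - degIn G B x / (2 * q)) / #Q := fun y hy => by
      have hcard : #Q ≤ degIn G B y + 1 :=
        card_le_degIn_add_one_of_isClique (hclique.subset fun _ hu => hmem.1 hu)
          (fun _ hu => (hmem.1 hu).1) hy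
      gcongr
      exact_mod_cast hcard
    simp only [charge, hx, if_true]
    rw [sum_add_distrib, ← sum_filter]
    calc _ ≤ #(nbrsIn G B x) • (1 / (2 * q : ℝ)) +
          #Q • ((1 - (degIn G B x : ℝ) / (2 * q)) / #Q) :=
          add_le_add (sum_const _).le (sum_le_card_nsmul _ _ _ hshare)
      _ = degIn G B x / (2 * q) + (1 - degIn G B x / (2 * q)) := by
          rw [nsmul_eq_mul, nsmul_eq_mul, mul_div_cancel₀ _ hQpos.ne', mul_one_div, degIn]
      _ = 1 := add_sub_cancel _ _
  · simp only [charge, hx, if_false, sum_const, nsmul_eq_mul, mul_one_div]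
    exact div_le_one_of_le₀ (le_max_left _ _) (by positivity)

theorem le_sum_charge_of_degIn_eq_one {c : ℕ} (hq : 0 < q) (hy : y ∈ B) (hsolo : degIn G T y = 1)
    (hdeg : ∀ x ∈ T, G.Adj x y → degIn G B x + c + degIn G B y + 1 ≤ 2 * q) :
    1 / (2 * q) * (2 + c / (degIn G B y + 1)) ≤ ∑ x ∈ nbrsIn G T y, charge G B T q x y := by
  obtain ⟨x, hx⟩ := card_eq_one.1 hsolo
  obtain ⟨hxT, hyx⟩ := mem_nbrsIn.1 (hx ▸ mem_singleton_self x)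
  have hdeg' : (degIn G B x : ℝ) + c + degIn G B y + 1 ≤ 2 * q := by
    exact_mod_cast hdeg x hxT hyx.symm
  have hshare : (c + degIn G B y + 1) / (2 * q) ≤ 1 - (degIn G B x : ℝ) / (2 * q) := by
    rw [le_sub_iff_add_le, ← add_div, div_le_one (by positivity)]
    linarith
  have hxsolo : HasSoloNeighbor G B T x := ⟨y, hy, hyx.symm, hsolo⟩
  rw [hx, sum_singleton, charge, if_pos hxsolo, if_pos hsolo]
  calc 1 / (2 * q : ℝ) * (2 + c / (degIn G B y + 1))
      = 1 / (2 * q) + (c + degIn G B y + 1) / (2 * q) / (degIn G B y + 1) := by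
        field_simp
        ring
    _ ≤ _ := by gcongr

theorem le_sum_charge_of_two_le_degIn {M : ℝ} (hq : 0 < q) (hM : 2 * q ≤ M)
    (htwo : 2 ≤ degIn G T y) (hdeg : ∀ x ∈ T, G.Adj x y → degIn G B x ≤ M) :
    2 / M ≤ ∑ x ∈ nbrsIn G T y, charge G B T q x y := by
  have hM₀ : 0 < M := lt_of_lt_of_le (by positivity) hM
  have hcharge : ∀ x ∈ nbrsIn G T y, 1 / M ≤ charge G B T q x y := fun x hx => by
    obtain ⟨hxT, hyx⟩ := mem_nbrsIn.1 hx
    by_cases hsolo : HasSoloNeighbor G B T x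
    · rw [charge, if_pos hsolo, if_neg (by omega), add_zero]
      gcongr
    · rw [charge, if_neg hsolo]
      exact one_div_le_one_div_of_le (lt_max_of_lt_right (by positivity))
        (max_le (hdeg x hxT hyx.symm) hM)
  calc 2 / M ≤ degIn G T y • (1 / M) := by
        rw [nsmul_eq_mul, mul_one_div]
        gcongr
        exact_mod_cast htwo
    _ ≤ _ := card_nsmul_le_sum _ _ _ hcharge

/-- Here `i` of the `t` classes are not solo for a vertex with degree `δ` in `B` and `e` surplus
neighbours in the other classes. -/
theorem div_le_solo_add_nonsolo {q t i e δ : ℝ} (hq : 0 < q) (hi : 0 ≤ i) (hie : i ≤ e)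
    (hδ : 0 ≤ δ) (hit : i ≤ t) (hsolo : i < t → δ + 1 ≤ 2 * q) :
    t / q ≤ (t - i) * (1 / (2 * q) * (2 + e / (δ + 1))) +
      i * (2 / (2 * q + max (t - (e + δ + 1)) 0)) := by
  have he : 0 ≤ e := hi.trans hie
  have hti : 0 ≤ t - i := sub_nonneg.2 hit
  set s := max (t - (e + δ + 1)) 0
  have hs₀ : 0 ≤ s := le_max_right _ _
  have hshare : s = 0 ∨ i * (1 + s / (2 * q)) ≤ (t - i) * (e / (δ + 1)) := by
    rcases le_or_gt (t - (e + δ + 1)) 0 with hle | hlt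
    · exact .inl (max_eq_right hle)
    right
    have hs' : s = t - (e + δ + 1) := max_eq_left hlt.le
    have hδq := hsolo (by linarith)
    calc i * (1 + s / (2 * q)) ≤ e * (1 + s / (δ + 1)) := by gcongr
      _ = e * ((δ + 1 + s) / (δ + 1)) := by field_simp
      _ ≤ e * ((t - i) / (δ + 1)) := by gcongr; linarith
      _ = (t - i) * (e / (δ + 1)) := by ring
  have hkey : 2 * i ≤ (t - i) * (e / (δ + 1)) + i * (4 * q / (2 * q + s)) := by
    rcases hshare with h0 | hshare
    · have hnonneg : 0 ≤ (t - i) * (e / (δ + 1)) := mul_nonneg hti (by positivity)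
      have htwo : 4 * q / (2 * q + s) = 2 := by rw [h0]; field_simp; ring
      rw [htwo]
      linarith
    · have htwo : 2 ≤ 1 + s / (2 * q) + 4 * q / (2 * q + s) := by
        field_simp
        nlinarith [sq_nonneg s, mul_pos hq hq]
      nlinarith [mul_le_mul_of_nonneg_left htwo hi]
  calc t / q = 1 / (2 * q) * (2 * (t - i) + 2 * i) := by field_simp; ring
    _ ≤ 1 / (2 * q) * (2 * (t - i) + ((t - i) * (e / (δ + 1)) + i * (4 * q / (2 * q + s)))) := by
        gcongr
    _ = _ := by field_simp; ring

theorem card_filter_ne_one_le_sum {f : κ → ℕ} (hf : ∀ i ∈ A, 0 < f i) :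
    #{i ∈ A | ¬ f i = 1} ≤ ∑ i ∈ A, (f i - 1) := by
  rw [card_filter]
  refine sum_le_sum fun i hi => ?_
  have := hf i hi
  split_ifs <;> omega

theorem card_div_le_sum_charge {c : ℕ} (hq : 0 < q) (hy : y ∈ B)
    (hpos : ∀ i ∈ A, 0 < degIn G (F i) y) (hc : ∑ i ∈ A, (degIn G (F i) y - 1) ≤ c)
    (hadj : ∀ i ∈ A, ∀ x ∈ F i, G.Adj x y →
      degIn G B x + c + degIn G B y + 1 ≤ 2 * q + #A)
    (hsolo : ∀ i ∈ A, degIn G (F i) y = 1 → ∀ x ∈ F i, G.Adj x y →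
      degIn G B x + c + degIn G B y + 1 ≤ 2 * q) :
    (#A : ℝ) / q ≤ ∑ i ∈ A, ∑ x ∈ nbrsIn G (F i) y, charge G B (F i) q x y := by
  set A₁ := {i ∈ A | degIn G (F i) y = 1} with hA₁
  set A₂ := {i ∈ A | ¬ degIn G (F i) y = 1} with hA₂
  have hcard : (#A₁ : ℝ) = #A - #A₂ :=
    eq_sub_of_add_eq (by exact_mod_cast card_filter_add_card_filter_not (s := A) _)
  have hδ : (#A₂ : ℝ) < #A → (degIn G B y : ℝ) + 1 ≤ 2 * q := fun hlt => by
    obtain ⟨i, hi⟩ : A₁.Nonempty := card_pos.1 (by exact_mod_cast hcard ▸ sub_pos.2 hlt)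
    obtain ⟨hiA, hi₁⟩ := mem_filter.1 hi
    obtain ⟨x, hx, hyx⟩ := degIn_pos.1 (hpos i hiA)
    have := hsolo i hiA hi₁ x hx hyx.symm
    exact_mod_cast (by omega : degIn G B y + 1 ≤ 2 * q)
  refine (div_le_solo_add_nonsolo (e := (c : ℝ)) (by exact_mod_cast hq) (Nat.cast_nonneg #A₂)
    (by exact_mod_cast (card_filter_ne_one_le_sum hpos).trans hc) (Nat.cast_nonneg _)
    (by exact_mod_cast card_filter_le _ _) hδ).trans ?_
  rw [← sum_filter_add_sum_filter_not A fun i => degIn G (F i) y = 1, ← hA₁, ← hA₂, ← hcard,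
    ← nsmul_eq_mul, ← nsmul_eq_mul]
  refine add_le_add (card_nsmul_le_sum _ _ _ fun i hi => ?_)
    (card_nsmul_le_sum _ _ _ fun i hi => ?_)
  · obtain ⟨hiA, hi₁⟩ := mem_filter.1 hi
    exact le_sum_charge_of_degIn_eq_one hq hy hi₁ (hsolo i hiA hi₁)
  · obtain ⟨hiA, hi₂⟩ := mem_filter.1 hi
    have htwo : 2 ≤ degIn G (F i) y := by have := hpos i hiA; omega
    refine le_sum_charge_of_two_le_degIn hq (le_add_of_nonneg_right (le_max_right _ _)) htwo
      fun x hx hxy => ?_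
    have hdeg : (degIn G B x : ℝ) + c + degIn G B y + 1 ≤ 2 * q + #A := by
      exact_mod_cast hadj i hiA x hx hxy
    linarith [le_max_left ((#A : ℝ) - (c + degIn G B y + 1)) 0]

theorem sum_sum_nbrsIn_comm {M : Type*} [AddCommMonoid M] (f : V → V → M) :
    ∑ y ∈ B, ∑ x ∈ nbrsIn G T y, f x y = ∑ x ∈ T, ∑ y ∈ nbrsIn G B x, f x y :=
  sum_comm' fun y x => by
    rw [mem_nbrsIn, mem_nbrsIn, G.adj_comm]
    tauto

theorem pos_of_discharging {c : ℕ} (hA : A.Nonempty) (hpos : ∀ i ∈ A, 0 < degIn G (F i) y)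
    (hc : ∑ i ∈ A, (degIn G (F i) y - 1) ≤ c)
    (hadj : ∀ i ∈ A, ∀ x ∈ F i, G.Adj x y →
      degIn G B x + c + degIn G B y + 1 ≤ 2 * q + #A)
    (hsolo : ∀ i ∈ A, degIn G (F i) y = 1 → ∀ x ∈ F i, G.Adj x y →
      degIn G B x + c + degIn G B y + 1 ≤ 2 * q) : 0 < q := by
  by_contra hq
  have htwo : ∀ i ∈ A, 1 ≤ degIn G (F i) y - 1 := fun i hi => by
    obtain ⟨x, hx, hyx⟩ := degIn_pos.1 (hpos i hi)
    have hi₁ : degIn G (F i) y ≠ 1 := fun hi₁ => by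
      have := hsolo i hi hi₁ x hx hyx.symm
      omega
    have := hpos i hi
    omega
  have hcard : #A ≤ c := ((card_eq_sum_ones A).trans_le (sum_le_sum htwo)).trans hc
  obtain ⟨i, hi⟩ := hA
  obtain ⟨x, hx, hyx⟩ := degIn_pos.1 (hpos i hi)
  have := hadj i hi x hx hyx.symm
  omega

/-- Each vertex of a class sends out a total charge of at most `1`, while each `y ∈ B` receives at
least `#A / q`. -/
theorem card_le_of_discharging (hA : A.Nonempty) (hF : ∀ i ∈ A, #(F i) ≤ k)
    (hpos : ∀ y ∈ B, ∀ i ∈ A, 0 < degIn G (F i) y)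
    (he : ∀ y ∈ B, ∑ i ∈ A, (degIn G (F i) y - 1) ≤ e y)
    (hadj : ∀ i ∈ A, ∀ x ∈ F i, ∀ y ∈ B, G.Adj x y →
      degIn G B x + e y + degIn G B y + 1 ≤ 2 * q + #A)
    (hsolo : ∀ i ∈ A, ∀ x ∈ F i, HasSoloNeighbor G B (F i) x → ∀ y ∈ B, G.Adj x y →
      degIn G B x + e y + degIn G B y + 1 ≤ 2 * q)
    (hclique : ∀ i ∈ A, ∀ x ∈ F i, G.IsClique {y | y ∈ B ∧ G.Adj x y ∧ degIn G (F i) y = 1}) :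
    #B ≤ k * q := by
  rcases B.eq_empty_or_nonempty with rfl | ⟨y₀, hy₀⟩
  · exact Nat.zero_le _
  have hadj' := fun y hy i hi x hx hxy => hadj i hi x hx y hy hxy
  have hsolo' : ∀ y ∈ B, ∀ i ∈ A, degIn G (F i) y = 1 → ∀ x ∈ F i, G.Adj x y →
      degIn G B x + e y + degIn G B y + 1 ≤ 2 * q := fun y hy i hi hi₁ x hx hxy =>
    hsolo i hi x hx ⟨y, hy, hxy, hi₁⟩ y hy hxy
  have hq : 0 < q :=
    pos_of_discharging hA (hpos y₀ hy₀) (he y₀ hy₀) (hadj' y₀ hy₀) (hsolo' y₀ hy₀)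
  have hsend : ∀ i ∈ A, ∀ x ∈ F i, ∑ y ∈ nbrsIn G B x, charge G B (F i) q x y ≤ 1 :=
    fun i hi x hx => sum_charge_le_one hq (fun hx' => by
      obtain ⟨y, hy, hxy, -⟩ := id hx'
      have := hsolo i hi x hx hx' y hy hxy
      omega) (hclique i hi x hx)
  have hcount : (#B : ℝ) * (#A / q) ≤ #A * k :=
    calc (#B : ℝ) * (#A / q) = #B • (#A / q : ℝ) := (nsmul_eq_mul _ _).symm
      _ ≤ ∑ y ∈ B, ∑ i ∈ A, ∑ x ∈ nbrsIn G (F i) y, charge G B (F i) q x y :=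
          card_nsmul_le_sum _ _ _ fun y hy =>
            card_div_le_sum_charge hq hy (hpos y hy) (he y hy) (hadj' y hy) (hsolo' y hy)
      _ = ∑ i ∈ A, ∑ x ∈ F i, ∑ y ∈ nbrsIn G B x, charge G B (F i) q x y := by
          rw [sum_comm]
          exact sum_congr rfl fun _ _ => sum_sum_nbrsIn_comm _
      _ ≤ ∑ _i ∈ A, (k : ℝ) := sum_le_sum fun _ hi =>
          (sum_le_card_nsmul _ _ _ (hsend _ hi)).trans (by simpa using hF _ hi)
      _ = #A * k := by rw [sum_const, nsmul_eq_mul]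
  have hA' : (0 : ℝ) < #A := by exact_mod_cast card_pos.2 hA
  rw [mul_div_left_comm, mul_le_mul_iff_right₀ hA', div_le_iff₀ (by exact_mod_cast hq)] at hcount
  exact_mod_cast hcount

end Discharging

section OreHajnalSzemeredi

open Finset

variable {V κ : Type*} {G : SimpleGraph V} {k : ℕ} {S : Finset V} {C : Finset κ}
  {F : κ → Finset V} {v x y : V} {W : κ}

theorem card_le_sum_add_card_filter_eq_zero [DecidableEq κ] {A : Finset κ} (f : κ → ℕ) (W : κ) :
    #A ≤ ∑ X ∈ A, f X + #{X ∈ A.erase W | f X = 0} + 1 := by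
  have hle : #(A.erase W) ≤ ∑ X ∈ A.erase W, f X + #{X ∈ A.erase W | f X = 0} := by
    rw [card_filter, ← sum_add_distrib, card_eq_sum_ones]
    exact sum_le_sum fun X _ => by split_ifs <;> omega
  have hsub := sum_le_sum_of_subset (f := f) (erase_subset W A)
  have hcard := pred_card_le_card_erase (s := A) (a := W)
  omega

variable [DecidableEq V]

local notation "𝒜" => accessibleColors G k F C
local notation "ℬ" => outerVertices G k F C v

theorem IsStuck.degIn_add_surplus_add_degIn_le [DecidableEq κ] (h : IsStuck G k S C F v)
    (hOre : OreOn G #C S) (hW : W ∈ 𝒜) (hx : x ∈ F W) (hy : y ∈ ℬ) (hxy : G.Adj x y) :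
    degIn G ℬ x + ∑ i ∈ 𝒜, (degIn G (F i) y - 1) + degIn G ℬ y + 1 ≤
      2 * #(C \ 𝒜) + #{X ∈ (𝒜).erase W | degIn G (F X) x = 0} := by
  have hxS : x ∈ S := erase_subset v S
    (h.isBoundedColoring.subset (accessibleColors_subset hW) hx)
  have hOre' := hOre x hxS y (h.outerVertices_subset hy) hxy
  have hC := card_sdiff_accessibleColors (G := G) (k := k) (F := F) (C := C)
  have hsurplus : ∑ i ∈ 𝒜, degIn G (F i) y = ∑ i ∈ 𝒜, (degIn G (F i) y - 1) + #𝒜 := by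
    rw [card_eq_sum_ones, ← sum_add_distrib]
    exact sum_congr rfl fun i hi => (Nat.sub_add_cancel (h.degIn_pos hy hi)).symm
  have hx' := card_le_sum_add_card_filter_eq_zero (A := 𝒜) (fun X => degIn G (F X) x) W
  rw [h.degIn_eq x, h.degIn_eq y] at hOre'
  omega

theorem IsStuck.exists_larger [DecidableEq κ] (h : IsStuck G k S C F v) (hS : #S ≤ k * #C)
    (hOre : OreOn G #C S) (hB : ∀ y ∈ ℬ, BoundedColorable G k ((ℬ).erase y) (C \ 𝒜)) :
    ∃ F' v', IsStuck G k S C F' v' ∧ #𝒜 < #(accessibleColors G k F' C) := by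
  classical
  by_contra hmax
  have hne : (𝒜).Nonempty := h.isBoundedColoring.accessibleColors_nonempty
    ((card_erase_lt_of_mem h.mem).trans_le hS)
  obtain ⟨A', hA', hA'ne, hcut⟩ :=
    exists_subset_forall_cutOff_eq_empty hne fun X hX => accessible_accessibleColors hX
  have hle : #ℬ ≤ k * #(C \ 𝒜) := by
    refine card_le_of_discharging (G := G) (F := F)
      (e := fun y => ∑ i ∈ 𝒜, (degIn G (F i) y - 1)) hA'ne
      ?_ ?_ ?_ ?_ ?_ ?_
    · exact fun i hi => h.isBoundedColoring.card_le i (accessibleColors_subset (hA' hi))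
    · exact fun y hy i hi => h.degIn_pos hy (hA' hi)
    · exact fun y _ => sum_le_sum_of_subset hA'
    · intro W hW x hx y hy hxy
      refine (h.degIn_add_surplus_add_degIn_le hOre (hA' hW) hx hy hxy).trans
        (Nat.add_le_add_left ((card_le_card ?_).trans (hcut W hW).2) _)
      exact fun X hX => mem_filter.2 ⟨(mem_filter.1 hX).1, x, hx, (mem_filter.1 hX).2⟩
    · rintro W hW x hx ⟨z, hz, hxz, hsolo⟩ y hy hxy
      refine (h.degIn_add_surplus_add_degIn_le hOre (hA' hW) hx hy hxy).trans_eq ?_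
      rw [add_eq_left, card_eq_zero, filter_eq_empty_iff]
      exact fun X hX => (h.degIn_pos_of_solo (hA' hW) (hcut W hW).1 hx hxz.symm hsolo (hB z hz)
        (mem_erase.1 hX).2 (mem_erase.1 hX).1).ne'
    · rintro W hW x hx y ⟨hy, hxy, hsolo⟩ y' ⟨hy', hxy', hsolo'⟩ hne
      by_contra hyy'
      obtain ⟨F', hF'⟩ := h.exists_larger_of_solo_pair (hA' hW) (hcut W hW).1 hx hy hxy.symm hsolo
        hy' hxy'.symm hsolo' hne hyy' (hB y hy)
      exact hmax ⟨F', x, hF'⟩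
  exact hle.not_gt (h.card_outerVertices ▸ Nat.lt_succ_self _)

/-- The Kierstead–Kostochka strengthening of the Hajnal–Szemerédi theorem. -/
theorem boundedColorable_of_oreOn (hS : #S ≤ k * #C) (hOre : OreOn G #C S) :
    BoundedColorable G k S C := by
  classical
  induction S using Finset.strongInduction generalizing C with
  | H S ih =>
  by_contra hnot
  have hne : S.Nonempty := nonempty_iff_ne_empty.2 fun hS₀ =>
    hnot (hS₀ ▸ boundedColorable_empty G k C)
  obtain ⟨v, hv⟩ := hne
  obtain ⟨F, hF⟩ := ih (S.erase v) (erase_ssubset hv) ((card_erase_le).trans hS)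
    (hOre.mono (erase_subset v S))
  have hlarge : ∀ n, ∃ F v, IsStuck G k S C F v ∧ n ≤ #(accessibleColors G k F C) := by
    intro n
    induction n with
    | zero => exact ⟨F, v, ⟨hv, hF, hnot⟩, Nat.zero_le _⟩
    | succ n ihn =>
      obtain ⟨F, v, h, hn⟩ := ihn
      obtain ⟨F', v', h', hlt⟩ := h.exists_larger hS hOre fun y hy =>
        ih _ ((erase_ssubset hy).trans_subset h.outerVertices_subset)
          (by rw [card_erase_of_mem hy, h.card_outerVertices, Nat.add_sub_cancel])
          ((h.oreOn_outerVertices hOre).mono (erase_subset y _))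
      exact ⟨F', v', h', hn.trans_lt hlt⟩
  obtain ⟨F, v, -, hcard⟩ := hlarge (#C + 1)
  exact (card_le_card (accessibleColors_subset (G := G) (k := k) (F := F))).not_gt hcard

end OreHajnalSzemeredi

section CliqueTiling

open Finset

variable {V κ : Type*} [DecidableEq V] {G : SimpleGraph V} {k : ℕ} {S T : Finset V}
  {C : Finset κ} {F : κ → Finset V}

/-- The classes of a colouring that attain the maximal size `k`. -/
def fullClasses (k : ℕ) (F : κ → Finset V) (C : Finset κ) : Finset (Finset V) :=
  {i ∈ C | #(F i) = k}.image F

theorem mem_fullClasses : T ∈ fullClasses k F C ↔ ∃ i ∈ C, #(F i) = k ∧ F i = T := by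
  simp only [fullClasses, mem_image, mem_filter, and_assoc]

theorem IsBoundedColoring.isNIndepSet_of_mem_fullClasses (h : IsBoundedColoring G k S C F)
    (hT : T ∈ fullClasses k F C) : G.IsNIndepSet k T := by
  obtain ⟨i, hi, hcard, rfl⟩ := mem_fullClasses.1 hT
  exact ⟨h.isIndepSet i hi, hcard⟩

theorem IsBoundedColoring.pairwiseDisjoint_fullClasses (h : IsBoundedColoring G k S C F) :
    (fullClasses k F C : Set (Finset V)).PairwiseDisjoint id := by
  intro T hT T' hT' hne
  obtain ⟨i, hi, -, rfl⟩ := mem_fullClasses.1 hT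
  obtain ⟨j, hj, -, rfl⟩ := mem_fullClasses.1 hT'
  exact h.pairwiseDisjoint hi hj fun hij => hne (congrArg F hij)

theorem IsBoundedColoring.sum_sub_card (h : IsBoundedColoring G k S C F) :
    ∑ i ∈ C, (k - #(F i)) = k * #C - #S := by
  rw [sum_tsub_distrib C h.card_le, sum_const, smul_eq_mul, mul_comm, ← h.biUnion_eq,
    card_biUnion h.pairwiseDisjoint]

theorem IsBoundedColoring.card_sdiff_biUnion_fullClasses_le (h : IsBoundedColoring G k S C F) :
    #(S \ (fullClasses k F C).biUnion id) ≤ (k - 1) * (k * #C - #S) := by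
  have hsub : S \ (fullClasses k F C).biUnion id ⊆ {i ∈ C | #(F i) ≠ k}.biUnion F := by
    intro x hx
    rw [mem_sdiff, ← h.biUnion_eq, mem_biUnion] at hx
    obtain ⟨⟨i, hi, hxi⟩, hx⟩ := hx
    refine mem_biUnion.2 ⟨i, mem_filter.2 ⟨hi, fun hcard => hx ?_⟩, hxi⟩
    exact mem_biUnion.2 ⟨F i, mem_fullClasses.2 ⟨i, hi, hcard, rfl⟩, hxi⟩
  calc #(S \ (fullClasses k F C).biUnion id)
      ≤ ∑ i ∈ C with #(F i) ≠ k, #(F i) := (card_le_card hsub).trans card_biUnion_le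
    _ ≤ ∑ i ∈ C with #(F i) ≠ k, (k - 1) * (k - #(F i)) := by
        refine sum_le_sum fun i hi => ?_
        have hlt := (h.card_le i (mem_filter.1 hi).1).lt_of_ne (mem_filter.1 hi).2
        exact (Nat.le_sub_one_of_lt hlt).trans (Nat.le_mul_of_pos_right _ (Nat.sub_pos_of_lt hlt))
    _ ≤ ∑ i ∈ C, (k - 1) * (k - #(F i)) := sum_le_sum_of_subset (filter_subset _ _)
    _ = (k - 1) * (k * #C - #S) := by rw [← mul_sum, h.sum_sub_card]

theorem exists_disjoint_isNClique {m : ℕ} (hS : #S ≤ k * m) (hOre : OreOn Gᶜ m S) :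
    ∃ 𝒢 : Finset (Finset V), (∀ T ∈ 𝒢, G.IsNClique k T) ∧
      (𝒢 : Set (Finset V)).PairwiseDisjoint id ∧
      #(S \ 𝒢.biUnion id) ≤ (k - 1) * (k * m - #S) := by
  rw [← card_range m] at hS hOre ⊢
  obtain ⟨F, hF⟩ := boundedColorable_of_oreOn hS hOre
  exact ⟨fullClasses k F (range m),
    fun T hT => (SimpleGraph.isNIndepSet_compl G).1 (hF.isNIndepSet_of_mem_fullClasses hT),
    hF.pairwiseDisjoint_fullClasses, hF.card_sdiff_biUnion_fullClasses_le⟩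

end CliqueTiling

section ReducedGraph

open Finset

variable {V : Type*} {G : SimpleGraph V} [DecidableRel G.Adj] {ε d : ℝ} {ℓ : ℕ}
  {P : Fin ℓ → Finset V}

theorem EpsRegular.symm {A B : Finset V} (h : EpsRegular G ε A B) : EpsRegular G ε B A := by
  intro X hX Y hY hXB hYA
  rw [G.edgeDensity_comm X Y, G.edgeDensity_comm B A]
  exact h Y hY X hX hYA hXB

theorem RedAdj.symm {i j : Fin ℓ} (h : RedAdj G ε d P i j) : RedAdj G ε d P j i :=
  ⟨h.1.symm, h.2.1.symm, G.edgeDensity_comm (P i) (P j) ▸ h.2.2⟩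

/-- The reduced graph `R` of the clusters `P`. -/
def reducedGraph (G : SimpleGraph V) [DecidableRel G.Adj] (ε d : ℝ) (P : Fin ℓ → Finset V) :
    SimpleGraph (Fin ℓ) where
  Adj := RedAdj G ε d P
  symm := ⟨fun _ _ => RedAdj.symm⟩
  loopless := ⟨fun _ h => h.1 rfl⟩

open Classical in
theorem degree_reducedGraph (i : Fin ℓ) :
    (reducedGraph G ε d P).degree i = redDeg G ε d P i := by
  rw [← SimpleGraph.card_neighborSet_eq_degree, ← Nat.card_eq_fintype_card,
    Nat.card_coe_set_eq]
  rfl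

end ReducedGraph

section Clusters

open Finset

variable {V ι : Type*} [Fintype V] [Fintype ι] {P : ι → Finset V} {L : ℕ}

theorem card_sdiff_biUnion_le [DecidableEq V] [DecidableEq ι] (hP : ∀ i, #(P i) ≤ L)
    (T : Finset ι) :
    #(univ \ T.biUnion P) ≤ #(univ \ univ.biUnion P) + #(univ \ T) * L := by
  have hsub : univ \ T.biUnion P ⊆ (univ \ univ.biUnion P) ∪ (univ \ T).biUnion P := by
    intro v
    simp only [mem_sdiff, mem_union, mem_biUnion, mem_univ, true_and]
    grind
  exact (card_le_card hsub).trans <| (card_union_le _ _).trans <|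
    Nat.add_le_add_left (card_biUnion_le_card_mul _ _ L fun i _ => hP i) _

theorem card_mul_le_card (hdisj : Pairwise fun i j => Disjoint (P i) (P j))
    (hP : ∀ i, L ≤ #(P i)) : Fintype.card ι * L ≤ Fintype.card V := by
  classical
  calc Fintype.card ι * L ≤ ∑ i, #(P i) := by
        simpa using card_nsmul_le_sum univ (fun i => #(P i)) L fun i _ => hP i
    _ = #(univ.biUnion P) := (card_biUnion fun _ _ _ _ hij => hdisj hij).symm
    _ ≤ Fintype.card V := card_le_univ _

theorem card_sdiff_biUnion_le_add_mul [DecidableEq V] [DecidableEq ι]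
    (hdisj : Pairwise fun i j => Disjoint (P i) (P j)) (hP : ∀ i, #(P i) = L) {c : ℝ}
    (hc : 0 ≤ c) {T : Finset ι} (hT : (#(univ \ T) : ℝ) ≤ c * Fintype.card ι) :
    (#(univ \ T.biUnion P) : ℝ) ≤ #(univ \ univ.biUnion P) + c * Fintype.card V := by
  have hcard : (Fintype.card ι * L : ℝ) ≤ Fintype.card V := by
    exact_mod_cast card_mul_le_card hdisj fun i => (hP i).ge
  calc (#(univ \ T.biUnion P) : ℝ)
      ≤ #(univ \ univ.biUnion P) + #(univ \ T) * L := by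
        exact_mod_cast card_sdiff_biUnion_le (fun i => (hP i).le) T
    _ ≤ #(univ \ univ.biUnion P) + c * Fintype.card ι * L := by gcongr
    _ = #(univ \ univ.biUnion P) + c * (Fintype.card ι * L) := by ring
    _ ≤ #(univ \ univ.biUnion P) + c * Fintype.card V := by gcongr

end Clusters

theorem exists_ore_number_of_colors {k ℓ : ℕ} {ε d : ℝ} (hk : 2 ≤ k) (hd : 0 < d)
    (hεd : ε ≤ d / 4) (hℓ : 2 * ((k : ℝ) - 1) / d ≤ ℓ) :
    ∃ r : ℕ, ℓ ≤ k * r ∧ 2 * (ℓ : ℝ) ≤ 2 * (1 - 1 / (k : ℝ) - d - 2 * ε) * ℓ + 2 * r ∧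
      (((k - 1) * (k * r - ℓ) : ℕ) : ℝ) ≤ 3 / 2 * (k : ℝ) ^ 2 * d * ℓ := by
  have hk' : (2 : ℝ) ≤ k := by exact_mod_cast hk
  have hD : 2 * ((k : ℝ) - 1) ≤ d * ℓ := (div_le_iff₀' hd).1 hℓ
  set D := d * ℓ
  set r := ⌈(ℓ : ℝ) / k + 3 / 2 * D⌉₊
  have hle : (ℓ : ℝ) / k + 3 / 2 * D ≤ r := Nat.le_ceil _
  have hlt : (r : ℝ) < (ℓ : ℝ) / k + 3 / 2 * D + 1 := Nat.ceil_lt_add_one (by positivity)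
  have hdiv : (k : ℝ) * (ℓ / k) = ℓ := by field_simp
  have hr : (ℓ : ℝ) ≤ k * r := by nlinarith
  have hdefect : (k : ℝ) * r - ℓ ≤ 3 / 2 * k * D + k := by nlinarith
  refine ⟨r, by exact_mod_cast hr, ?_, ?_⟩
  · have hεℓ : ε * ℓ ≤ d / 4 * ℓ := by gcongr
    have hexpand : 2 * (1 - 1 / (k : ℝ) - d - 2 * ε) * ℓ =
        2 * ℓ - 2 * (ℓ / k) - 2 * D - 4 * (ε * ℓ) := by ring
    linarith
  · have hcast : (((k - 1) * (k * r - ℓ) : ℕ) : ℝ) = ((k : ℝ) - 1) * (k * r - ℓ) := by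
      rw [Nat.cast_mul, Nat.cast_sub (by omega), Nat.cast_sub (by exact_mod_cast hr)]
      push_cast
      rfl
    calc (((k - 1) * (k * r - ℓ) : ℕ) : ℝ) = ((k : ℝ) - 1) * (k * r - ℓ) := hcast
      _ ≤ ((k : ℝ) - 1) * (3 / 2 * k * D + k) := by gcongr; linarith
      _ = (3 / 2 * k ^ 2 - 3 / 2 * k) * D + k / 2 * (2 * (k - 1)) := by ring
      _ ≤ (3 / 2 * k ^ 2 - 3 / 2 * k) * D + k / 2 * D := by gcongr
      _ = (3 / 2 * k ^ 2 - k) * D := by ring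
      _ ≤ 3 / 2 * k ^ 2 * D := by gcongr; linarith
      _ = 3 / 2 * k ^ 2 * d * ℓ := (mul_assoc _ _ _).symm

/-- **Lemma (balanced decomposition).** Given clusters `V₁, …, V_ℓ` of size `L` covering
all but at most `εn` vertices, with `ℓ ≥ 2(k-1)/d` and the reduced graph satisfying
`d_R(i)+d_R(j) ≥ 2(1-1/k-d-2ε)ℓ` for nonadjacent `i ≠ j`, there is a collection of
pairwise disjoint groups of `k` clusters, each group forming a clique in the reduced
graph, covering all but at most `2k²dn` vertices of `G`. -/
theorem balanced_decomposition {V : Type*} [Fintype V] [DecidableEq V]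
    (G : SimpleGraph V) [DecidableRel G.Adj]
    (k : ℕ) (hk : 2 ≤ k) (ε d : ℝ) (hε : 0 < ε) (hεd : ε ≤ d / 4)
    (hd0 : 0 < d) (hd1 : d < 1)
    (ℓ L : ℕ) (P : Fin ℓ → Finset V)
    (hdisj : ∀ i j : Fin ℓ, i ≠ j → Disjoint (P i) (P j))
    (hsize : ∀ i, (P i).card = L)
    (hcover : ((Finset.univ \ Finset.univ.biUnion P).card : ℝ) ≤ ε * (Fintype.card V))
    (hℓ : 2 * ((k : ℝ) - 1) / d ≤ (ℓ : ℝ))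
    (hOreR : ∀ i j : Fin ℓ, i ≠ j → ¬ RedAdj G ε d P i j →
      2 * (1 - 1 / (k : ℝ) - d - 2 * ε) * (ℓ : ℝ) ≤
        (redDeg G ε d P i : ℝ) + (redDeg G ε d P j : ℝ)) :
    ∃ 𝒢 : Finset (Finset (Fin ℓ)),
      (∀ S ∈ 𝒢, S.card = k ∧ ∀ i ∈ S, ∀ j ∈ S, i ≠ j → RedAdj G ε d P i j) ∧
      ((𝒢 : Set (Finset (Fin ℓ))).Pairwise fun S T => Disjoint S T) ∧
      ((Finset.univ \ (𝒢.biUnion id).biUnion P).card : ℝ) ≤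
        2 * (k : ℝ) ^ 2 * d * (Fintype.card V) := by
  have hk' : (2 : ℝ) ≤ k := by exact_mod_cast hk
  obtain ⟨r, hr, hrOre, hrcard⟩ := exists_ore_number_of_colors hk hd0 hεd hℓ
  have hOre : OreOn (reducedGraph G ε d P)ᶜ r Finset.univ := by
    refine oreOn_compl_univ fun i j hij hadj => ?_
    rw [Fintype.card_fin, degree_reducedGraph, degree_reducedGraph]
    exact_mod_cast hrOre.trans (add_le_add_left (hOreR i j hij hadj) _)
  obtain ⟨𝒢, hclique, hdisjoint, hleft⟩ :=
    exists_disjoint_isNClique (by simpa using hr) hOre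
  refine ⟨𝒢, fun S hS => ⟨(hclique S hS).card_eq, (hclique S hS).isClique⟩, hdisjoint, ?_⟩
  have hleft' : ((Finset.univ \ 𝒢.biUnion id).card : ℝ) ≤
      3 / 2 * (k : ℝ) ^ 2 * d * Fintype.card (Fin ℓ) := by
    rw [Finset.card_univ, Fintype.card_fin] at hleft
    rw [Fintype.card_fin]
    exact (Nat.cast_le.2 hleft).trans hrcard
  calc ((Finset.univ \ (𝒢.biUnion id).biUnion P).card : ℝ)
      ≤ (Finset.univ \ Finset.univ.biUnion P).card + 3 / 2 * (k : ℝ) ^ 2 * d * Fintype.card V :=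
        card_sdiff_biUnion_le_add_mul (fun i j => hdisj i j) hsize (by positivity) hleft'
    _ ≤ d / 4 * Fintype.card V + 3 / 2 * (k : ℝ) ^ 2 * d * Fintype.card V := by
        gcongr
        exact hcover.trans (by gcongr)
    _ = (1 / 4 + 3 / 2 * (k : ℝ) ^ 2) * d * Fintype.card V := by ring
    _ ≤ 2 * (k : ℝ) ^ 2 * d * Fintype.card V := by gcongr; nlinarith
end

section
/- Let k ≥ 2 be an integer, let R be a graph on ℓ vertices with k dividing ℓ, and let 𝒫 be a partition of V(R) into ℓ/k parts, each of size k. Let d, ε ≥ 0 be reals with k(d + 2ε) + k²/ℓ ≤ 1/2. Define a directed graph D on V(R) by putting an edge from U to W (for U ≠ W) if and only if W belongs to a part P ∈ 𝒫 with U ∉ P and U is adjacent in R to every vertex of P \ {W}. Then every vertex U of R with d_R(U) ≥ (1 − 1/k − d − 2ε)·ℓ satisfies d⁺_D(U) ≥ ℓ/(2k). -/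
/-!
Among `m` parts of size at least two, each part `P` avoiding `U` contributes at least two to the sum
of the out-degree of `U` and the number of its non-neighbours: if `U` misses no vertex of `P`, then
every vertex of `P` is an out-neighbour; if it misses exactly one, that one is an out-neighbour; and
otherwise it misses at least two. The part of `U` contributes at least one, `U` itself being a
non-neighbour. Hence `2m ≤ d⁺(U) + (ℓ - d(U)) + 1`, and the degree condition on `U` bounds
`ℓ - d(U)` by `3m/2 - 1`.
-/

section TransferDigraph

open Finset

lemma sum_card_filter_parts {α : Type*} [DecidableEq α] {s : Finset α} (P : Finpartition s)
    (p : α → Prop) [DecidablePred p] : ∑ A ∈ P.parts, #{x ∈ A | p x} = #{x ∈ s | p x} := by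
  rw [← (P.restrict (filter_subset p s)).sum_card_parts,
    P.sum_restrict (filter_subset p s) card card_empty]
  refine sum_congr rfl fun A hA => congrArg card ?_
  rw [inf_eq_inter, inter_filter, inter_eq_left.mpr (P.subset hA)]

lemma two_le_card_filter_forall_ne_add_card_filter_not {α : Type*} {s : Finset α}
    (hs : 2 ≤ #s) (p : α → Prop) [DecidablePred p]
    [DecidablePred fun w => ∀ x ∈ s, x ≠ w → p x] :
    2 ≤ #{w ∈ s | ∀ x ∈ s, x ≠ w → p x} + #{x ∈ s | ¬p x} := by
  obtain hnone | hone | htwo :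
      #{x ∈ s | ¬p x} = 0 ∨ #{x ∈ s | ¬p x} = 1 ∨ 2 ≤ #{x ∈ s | ¬p x} := by
    omega
  · have hp : ∀ x ∈ s, p x := by simpa [filter_eq_empty_iff] using hnone
    rw [filter_true_of_mem fun w _ x hx _ => hp x hx]
    omega
  · obtain ⟨w, hw⟩ := card_eq_one.mp hone
    have hws : w ∈ s := filter_subset _ _ (hw ▸ mem_singleton_self w)
    have hp : ∀ x ∈ s, x ≠ w → p x := fun x hx hxw => by
      by_contra hpx
      exact hxw (mem_singleton.mp (hw ▸ mem_filter.mpr ⟨hx, hpx⟩))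
    have hpos : 0 < #{w ∈ s | ∀ x ∈ s, x ≠ w → p x} :=
      card_pos.mpr ⟨w, mem_filter.mpr ⟨hws, hp⟩⟩
    omega
  · omega

variable {V : Type*} [Fintype V] [DecidableEq V]

/-- The digraph `D` of the theorem: an edge `U → W` means that `U` can take the place of `W` in the
part of `W`, being outside that part and adjacent in `R` to all its other vertices. -/
def transferDigraph (R : SimpleGraph V) (Part : Finpartition (univ : Finset V)) : Digraph V where
  Adj U W := U ≠ W ∧ ∃ P ∈ Part.parts, W ∈ P ∧ U ∉ P ∧ ∀ x ∈ P, x ≠ W → R.Adj U x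

lemma transferDigraph_adj_iff_of_mem {R : SimpleGraph V} {Part : Finpartition (univ : Finset V)}
    {P : Finset V} (hP : P ∈ Part.parts) {U W : V} (hU : U ∉ P) (hW : W ∈ P) :
    (transferDigraph R Part).Adj U W ↔ ∀ x ∈ P, x ≠ W → R.Adj U x := by
  refine ⟨?_, fun h => ⟨fun hUW => hU (hUW ▸ hW), P, hP, hW, hU, h⟩⟩
  rintro ⟨-, Q, hQ, hWQ, -, h⟩
  rwa [Part.eq_of_mem_parts hP hQ hW hWQ]

lemma two_le_card_filter_transferDigraph_adj_add (R : SimpleGraph V) [DecidableRel R.Adj]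
    {Part : Finpartition (univ : Finset V)} (U : V) [DecidablePred ((transferDigraph R Part).Adj U)]
    {P : Finset V} (hP : P ∈ Part.parts) (hcard : 2 ≤ #P) :
    2 ≤ #{W ∈ P | (transferDigraph R Part).Adj U W} + #{W ∈ P | ¬R.Adj U W}
      + #{W ∈ P | W = U} := by
  classical
  by_cases hU : U ∈ P
  · have hmiss : 0 < #{W ∈ P | ¬R.Adj U W} := card_pos.mpr ⟨U, by simp [hU]⟩
    have hself : 0 < #{W ∈ P | W = U} := card_pos.mpr ⟨U, by simp [hU]⟩
    omega
  · rw [filter_congr fun W hW => transferDigraph_adj_iff_of_mem hP hU hW]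
    exact le_add_right (two_le_card_filter_forall_ne_add_card_filter_not hcard (R.Adj U))

lemma two_mul_card_parts_add_degree_le (R : SimpleGraph V) [DecidableRel R.Adj]
    (Part : Finpartition (univ : Finset V)) (hparts : ∀ P ∈ Part.parts, 2 ≤ #P) (U : V) :
    2 * #Part.parts + R.degree U ≤
      {W | (transferDigraph R Part).Adj U W}.ncard + Fintype.card V + 1 := by
  classical
  have hsum : 2 * #Part.parts ≤
      #{W | (transferDigraph R Part).Adj U W} + #{W | ¬R.Adj U W} + #{W | W = U} := by
    simp only [← sum_card_filter_parts Part, ← sum_add_distrib]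
    rw [mul_comm, ← smul_eq_mul]
    exact card_nsmul_le_sum _ _ _ fun P hP =>
      two_le_card_filter_transferDigraph_adj_add R U hP (hparts P hP)
  have hdegree : R.degree U + #{W | ¬R.Adj U W} = Fintype.card V := by
    rw [← R.card_neighborFinset_eq_degree, R.neighborFinset_eq_filter,
      card_filter_add_card_filter_not, card_univ]
  have hself : #{W | W = U} = 1 := by rw [filter_eq' univ U, if_pos (mem_univ U), card_singleton]
  have hncard : {W | (transferDigraph R Part).Adj U W}.ncard =
      #{W | (transferDigraph R Part).Adj U W} := by
    rw [← Set.ncard_coe_finset, coe_filter_univ]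
  omega

theorem transfer_digraph_outdegree_general (R : SimpleGraph V) [DecidableRel R.Adj]
    (Part : Finpartition (univ : Finset V)) (hparts : ∀ P ∈ Part.parts, 2 ≤ #P)
    {k : ℝ} (hk : #Part.parts * k = Fintype.card V) {δ : ℝ}
    (hsmall : k * δ + k / Fintype.card V ≤ 1 / 2) (U : V)
    (hU : (1 - 1 / k - δ) * Fintype.card V ≤ R.degree U) :
    Fintype.card V / (2 * k) ≤ ({W | (transferDigraph R Part).Adj U W}.ncard : ℝ) := by
  have hcount : (2 * #Part.parts + R.degree U : ℝ) ≤
      {W | (transferDigraph R Part).Adj U W}.ncard + Fintype.card V + 1 :=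
    mod_cast two_mul_card_parts_add_degree_le R Part hparts U
  have hV : 0 < #Part.parts * k := hk ▸ mod_cast Fintype.card_pos_iff.mpr ⟨U⟩
  have hm : (0 : ℝ) < #Part.parts :=
    (Nat.cast_nonneg _).lt_of_ne' (left_ne_zero_of_mul hV.ne')
  have hk_pos : 0 < k := pos_of_mul_pos_right hV hm.le
  rw [← hk] at hsmall hU hcount ⊢
  generalize (#Part.parts : ℝ) = m at *
  have hslack : k * δ * m + 1 ≤ m / 2 := by
    calc k * δ * m + 1 = (k * δ + k / (m * k)) * m := by field_simp
      _ ≤ 1 / 2 * m := by gcongr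
      _ = m / 2 := by ring
  have hmissing : m * k - m - k * δ * m ≤ R.degree U := by
    calc m * k - m - k * δ * m = (1 - 1 / k - δ) * (m * k) := by field_simp
      _ ≤ R.degree U := hU
  calc m * k / (2 * k) = m / 2 := by field_simp
    _ ≤ _ := by linarith

end TransferDigraph

/-- **Proposition (out-degree in the transfer digraph).** Let `R` be a graph on `ℓ`
vertices with `k ∣ ℓ`, and let `Part` be a partition of `V(R)` into parts of size `k`.
Suppose `k(d + 2ε) + k²/ℓ ≤ 1/2`.  In the directed graph `D` with an edge from `U` to
`W ≠ U` iff `W` lies in a part `P` with `U ∉ P` and `U` is adjacent in `R` to every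
vertex of `P \ {W}`, every vertex `U` with `d_R(U) ≥ (1 - 1/k - d - 2ε)ℓ` has
out-degree at least `ℓ/(2k)`. -/
theorem transfer_digraph_outdegree {V : Type*} [Fintype V] [DecidableEq V]
    (R : SimpleGraph V) [DecidableRel R.Adj]
    (k : ℕ) (hk : 2 ≤ k) (hdvd : k ∣ Fintype.card V)
    (Part : Finpartition (Finset.univ : Finset V))
    (hparts : ∀ P ∈ Part.parts, P.card = k)
    (d ε : ℝ) (hd : 0 ≤ d) (hε : 0 ≤ ε)
    (hsmall : (k : ℝ) * (d + 2 * ε) + (k : ℝ) ^ 2 / (Fintype.card V : ℝ) ≤ 1 / 2)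
    (U : V)
    (hU : (1 - 1 / (k : ℝ) - d - 2 * ε) * (Fintype.card V : ℝ) ≤ (R.degree U : ℝ)) :
    (Fintype.card V : ℝ) / (2 * (k : ℝ)) ≤
      ({W : V | U ≠ W ∧ ∃ P ∈ Part.parts, W ∈ P ∧ U ∉ P ∧
        ∀ x ∈ P, x ≠ W → R.Adj U x}.ncard : ℝ) := by
  have hmul : (Part.parts.card : ℝ) * k = Fintype.card V :=
    mod_cast (Finset.sum_const_nat hparts).symm.trans Part.sum_card_parts
  have hk_le : (k : ℝ) / Fintype.card V ≤ (k : ℝ) ^ 2 / Fintype.card V := by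
    gcongr
    exact mod_cast Nat.le_self_pow two_ne_zero k
  exact transfer_digraph_outdegree_general R Part (fun P hP => hk.trans_eq (hparts P hP).symm) hmul
    (δ := d + 2 * ε) (by linarith) U (by rwa [← sub_sub])
end

section
/- (Kierstead–Kostochka.) Let r ≥ 1 and let G be a graph on n vertices with r dividing n. If d(x) + d(y) ≥ 2(1 − 1/r)·n − 1 for all nonadjacent vertices x, y ∈ V(G), then G contains a K_r-factor, i.e., a collection of pairwise vertex-disjoint complete subgraphs on r vertices covering every vertex of G. -/
/-!
A `K_r`-factor of `G` is a proper colouring of the complement in which every class has `r`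
vertices, so the task is to colour a graph on `k * s` vertices with `k` classes of size `s`, given
that the degrees of any two adjacent vertices sum to at most `2 * k - 1`. By induction on the
edges, delete those at one vertex and colour the rest: the colouring is then correct up to that
vertex.

Such a colouring splits the vertices into a part `A` with colours `S`, in which the class `i₀` is
one vertex short and is reached from every other class by moving single vertices, and a rest that
is equitably coloured once one vertex is left out. Choose the split to maximise first `#S`, then
the number of edges outside `A`, then the degree sum of `A`. A vertex outside `A` without
neighbours in some class of `A` would either complete the colouring or enlarge `S`, so every vertex
outside `A` has neighbours in all classes of `A`; by induction on the number of colours, the rest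
can then be coloured whichever of its vertices is left out.

Now consider the classes of `A` that are terminal, i.e. not needed by the others to reach `i₀`. If
`z` is the only neighbour of `y ∉ A` in a terminal class, swapping `y` and `z` yields another
split, and maximality bounds the degree of `z` outside `A`. Let every vertex of the terminal
classes divide a charge of `q`, the number of colours outside `S`, among its neighbours outside
`A`. For a suitable set `T` of terminal classes, the degree bounds give each vertex outside `A`
charge at least `#T`, while the total is at most `#T * q * s`. So there are at most `q * s`
vertices outside `A`, but there are in fact `q * s + 1`.
-/

namespace KiersteadKostochka

open Finset Function

section Degrees

variable {V : Type*} {G : SimpleGraph V} {X A : Finset V} {v w y z : V}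

open Classical in
/-- The number of neighbours of `v` in `X`. -/
noncomputable def degOn (G : SimpleGraph V) (X : Finset V) (v : V) : ℕ :=
  #{w ∈ X | G.Adj v w}

theorem degOn_mono (h : A ⊆ X) (v : V) : degOn G A v ≤ degOn G X v := by
  classical exact card_le_card (filter_subset_filter _ h)

theorem degOn_mono_graph {H : SimpleGraph V} (h : H ≤ G) (X : Finset V) (v : V) :
    degOn H X v ≤ degOn G X v := by
  classical exact card_le_card (monotone_filter_right _ fun _ _ hw => h hw)

theorem degOn_pos (hw : w ∈ X) (h : G.Adj v w) : 0 < degOn G X v := by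
  classical exact card_pos.2 ⟨w, mem_filter.2 ⟨hw, h⟩⟩

theorem eq_of_degOn_eq_one (h : degOn G X v = 1) (hy : y ∈ X) (hvy : G.Adj v y) (hz : z ∈ X)
    (hvz : G.Adj v z) : y = z := by
  classical exact card_le_one.1 h.le y (mem_filter.2 ⟨hy, hvy⟩) z (mem_filter.2 ⟨hz, hvz⟩)

theorem degOn_sdiff_add_degOn [DecidableEq V] (h : A ⊆ X) (v : V) :
    degOn G (X \ A) v + degOn G A v = degOn G X v := by
  classical
  rw [degOn, degOn, ← card_union_of_disjoint (disjoint_filter_filter sdiff_disjoint),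
    ← filter_union, sdiff_union_of_subset h, degOn]

theorem degOn_erase_of_adj [DecidableEq V] (hw : w ∈ X) (h : G.Adj v w) :
    degOn G (X.erase w) v + 1 = degOn G X v := by
  classical
  rw [degOn, filter_erase, card_erase_add_one (mem_filter.2 ⟨hw, h⟩), degOn]

theorem degOn_erase_self [DecidableEq V] (X : Finset V) (v : V) :
    degOn G (X.erase v) v = degOn G X v := by
  classical
  rw [degOn, filter_erase, erase_eq_of_notMem (by simp), degOn]

theorem sum_degOn_insert [DecidableEq V] (hz : z ∉ X) :
    ∑ v ∈ insert z X, degOn G (insert z X) v = ∑ v ∈ X, degOn G X v + 2 * degOn G X z := by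
  classical
  have hsymm : ∑ v ∈ X, (if G.Adj v z then 1 else 0) = ∑ v ∈ X, if G.Adj z v then 1 else 0 :=
    sum_congr rfl fun v _ => by rw [G.adj_comm]
  simp only [degOn, card_filter, sum_insert hz, G.irrefl, sum_add_distrib, if_false, hsymm]
  ring

theorem sum_degOn_swap [DecidableEq V] (hy : y ∈ X) (hz : z ∉ X) (h : G.Adj z y) :
    ∑ v ∈ insert z (X.erase y), degOn G (insert z (X.erase y)) v + 2 + 2 * degOn G X y =
      ∑ v ∈ X, degOn G X v + 2 * degOn G X z := by
  have insert_z := sum_degOn_insert (G := G) (fun hz' => hz (mem_of_mem_erase hz') : z ∉ X.erase y)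
  have insert_y := sum_degOn_insert (G := G) (notMem_erase y X)
  rw [insert_erase hy, degOn_erase_self] at insert_y
  have := degOn_erase_of_adj hy h
  lia

theorem degOn_compl_univ_add_degree [Fintype V] (G : SimpleGraph V) [DecidableRel G.Adj] (v : V) :
    degOn Gᶜ univ v + G.degree v + 1 = Fintype.card V := by
  classical
  have hdeg : degOn Gᶜ univ v = Gᶜ.degree v := by
    rw [degOn, ← SimpleGraph.card_neighborFinset_eq_degree]
    congr 1
    ext w
    simp
  have := G.degree_compl v
  have := G.degree_lt_card_verts v
  lia

/-- Ore's condition for `k` colours on the subgraph induced by `X`: the degrees of adjacent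
vertices sum to at most `2 * k - 1`. -/
def OreCondition (G : SimpleGraph V) (X : Finset V) (k : ℕ) : Prop :=
  ∀ ⦃u⦄, u ∈ X → ∀ ⦃v⦄, v ∈ X → G.Adj u v → degOn G X u + degOn G X v < 2 * k

theorem OreCondition.mono_graph {H : SimpleGraph V} {k : ℕ} (hG : OreCondition G X k)
    (h : H ≤ G) : OreCondition H X k := fun u hu v hv huv =>
  (add_le_add (degOn_mono_graph h X u) (degOn_mono_graph h X v)).trans_lt (hG hu hv (h huv))

end Degrees

section Accessible

variable {ι : Type*} [DecidableEq ι] {R R' : ι → ι → Prop} {i₀ u : ι} {S M : Finset ι}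

/-- From every element of the set, `i₀` can be reached by steps of `R` within the set. The
inductive form, growing the set one element at a time, is the one used for recolouring. -/
inductive Accessible (R : ι → ι → Prop) (i₀ : ι) : Finset ι → Prop
  | base : Accessible R i₀ {i₀}
  | step {S : Finset ι} {i j : ι} (hS : Accessible R i₀ S) (hi : i ∉ S) (hj : j ∈ S)
      (hij : R i j) : Accessible R i₀ (insert i S)

namespace Accessible

theorem mem (h : Accessible R i₀ S) : i₀ ∈ S := by
  induction h with
  | base => exact mem_singleton_self _
  | step _ _ _ _ ih => exact mem_insert_of_mem ih

theorem mono (h : Accessible R i₀ S) (hR : ∀ i ∈ S, ∀ j ∈ S, R i j → R' i j) :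
    Accessible R' i₀ S := by
  induction h with
  | base => exact base
  | step _ hi hj hij ih =>
    exact step (ih fun i hi j hj => hR i (mem_insert_of_mem hi) j (mem_insert_of_mem hj)) hi hj
      (hR _ (mem_insert_self _ _) _ (mem_insert_of_mem hj) hij)

theorem exists_rel_of_not_subset (h : Accessible R i₀ S) (hM : i₀ ∈ M) (hSM : ¬S ⊆ M) :
    ∃ i ∈ S, i ∉ M ∧ ∃ j ∈ M, R i j := by
  induction h with
  | base => exact absurd (singleton_subset_iff.2 hM) hSM
  | @step S i j _ _ hj hij ih =>
    by_cases hS : S ⊆ M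
    · exact ⟨i, mem_insert_self _ _, fun hi => hSM (insert_subset hi hS), j, hS hj, hij⟩
    · obtain ⟨i', hi', hrel⟩ := ih hS
      exact ⟨i', mem_insert_of_mem hi', hrel⟩

theorem exists_rel_of_erase {i : ι} (h : Accessible R i₀ S) (hi : i ∈ S)
    (hSi : Accessible R i₀ (S.erase i)) : ∃ j ∈ S.erase i, R i j := by
  obtain ⟨i', hi'S, hi', j, hj, hij⟩ :=
    h.exists_rel_of_not_subset hSi.mem fun hsub => notMem_erase i S (hsub hi)
  obtain rfl : i' = i := by_contra fun hne => hi' (mem_erase.2 ⟨hne, hi'S⟩)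
  exact ⟨j, hj, hij⟩

theorem exists_closed_superset (hM : Accessible R i₀ M) (hMS : M ⊆ S) :
    ∃ N, M ⊆ N ∧ N ⊆ S ∧ Accessible R i₀ N ∧ ∀ i ∈ S, i ∉ N → ∀ j ∈ N, ¬R i j := by
  have hfin : {N | N ⊆ S ∧ Accessible R i₀ N}.Finite :=
    S.powerset.finite_toSet.subset fun N hN => mem_coe.2 (mem_powerset.2 hN.1)
  obtain ⟨N, hMN, hN⟩ := hfin.exists_le_maximal (a := M) ⟨hMS, hM⟩
  refine ⟨N, hMN, hN.prop.1, hN.prop.2, fun i hiS hiN j hj hij => hiN ?_⟩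
  exact hN.le_of_ge ⟨insert_subset hiS hN.prop.1, hN.prop.2.step hiN hj hij⟩ (subset_insert i N)
    (mem_insert_self i N)

end Accessible

/-- Every element of `S` outside `insert u M` that reaches `i₀` within `S` does so through `u`:
it has no step into `M`, while `insert u M` is accessible. -/
structure IsBottleneck (R : ι → ι → Prop) (i₀ : ι) (S M : Finset ι) (u : ι) : Prop where
  notMem : u ∉ M
  accessible : Accessible R i₀ (insert u M)
  ssubset : insert u M ⊂ S
  not_rel : ∀ i ∈ S, i ∉ insert u M → ∀ j ∈ M, ¬R i j

theorem IsBottleneck.exists_of_not_accessible {i : ι} (hM : IsBottleneck R i₀ S M u)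
    (hS : Accessible R i₀ S) (hi : i ∈ S) (hiM : i ∉ insert u M)
    (hacc : ¬Accessible R i₀ (S.erase i)) : ∃ N, insert u M ⊆ N ∧ IsBottleneck R i₀ S N i := by
  obtain ⟨N, hMN, hNS, hN, hclosed⟩ := hM.accessible.exists_closed_superset
    (subset_erase.2 ⟨hM.ssubset.subset, hiM⟩)
  have hiN : i ∉ N := fun h => notMem_erase i S (hNS h)
  have hne : N ≠ S.erase i := fun h => hacc (h ▸ hN)
  obtain ⟨i', hi'S, hi'N, j, hj, hij⟩ :=
    hS.exists_rel_of_not_subset hN.mem fun hsub => hiN (hsub hi)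
  obtain rfl : i' = i := by_contra fun h => hclosed i' (mem_erase.2 ⟨h, hi'S⟩) hi'N j hj hij
  refine ⟨N, hMN, hiN, hN.step hiN hj hij, ?_, fun l hl hlN => ?_⟩
  · refine (insert_subset hi (hNS.trans (erase_subset _ _))).ssubset_of_ne fun h => hne ?_
    rw [← h, erase_insert hiN]
  · obtain ⟨hli, hlN⟩ := not_or.1 (mem_insert.not.1 hlN)
    exact hclosed l (mem_erase.2 ⟨hli, hl⟩) hlN

theorem Accessible.exists_terminal (h : Accessible R i₀ S) :
    ∃ (T : Finset ι) (u : ι), T ⊆ S ∧ T.Nonempty ∧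
      (∀ i ∈ T, S = {i} ∨ Accessible R i₀ (S.erase i)) ∧
      ∀ i ∈ T, ∀ j ∈ S, j ∉ T → j ≠ u → ¬R i j := by
  by_cases hS : S = {i₀}
  · subst hS
    exact ⟨{i₀}, i₀, Subset.rfl, singleton_nonempty _, by simp, fun i _ j hj hj' =>
      absurd hj hj'⟩
  have hstart : IsBottleneck R i₀ S ∅ i₀ :=
    ⟨notMem_empty _, .base, (singleton_subset_iff.2 h.mem).ssubset_of_ne (Ne.symm hS), by simp⟩
  have hfin : {M | ∃ u, IsBottleneck R i₀ S M u}.Finite :=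
    S.powerset.finite_toSet.subset fun M ⟨_, hM⟩ =>
      mem_coe.2 (mem_powerset.2 ((subset_insert _ _).trans hM.ssubset.subset))
  obtain ⟨M, hmax⟩ := hfin.exists_maximal ⟨∅, i₀, hstart⟩
  obtain ⟨u, hM⟩ := hmax.prop
  refine ⟨S \ insert u M, u, sdiff_subset, sdiff_nonempty.2 hM.ssubset.not_subset,
    fun i hi => ?_, fun i hi j hj hjT hju => ?_⟩
  · obtain ⟨hiS, hiM⟩ := mem_sdiff.1 hi
    by_contra! hcon
    obtain ⟨N, hMN, hN⟩ := hM.exists_of_not_accessible h hiS hiM hcon.2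
    exact hM.notMem (hmax.le_of_ge ⟨i, hN⟩ ((subset_insert u M).trans hMN)
      (hMN (mem_insert_self u M)))
  · obtain ⟨hiS, hiM⟩ := mem_sdiff.1 hi
    refine hM.not_rel i hiS hiM j ?_
    simpa [hj, hju] using hjT

end Accessible

section Coloring

variable {V ι : Type*} {G : SimpleGraph V} {X A B : Finset V}
  {K S T : Finset ι} {c d : V → ι} {i j : ι} {s : ℕ} {v y z : V}

/-- `c` restricts to a proper colouring of the subgraph of `G` induced by `X`, with colours
in `K`. -/
structure IsColoringOn (G : SimpleGraph V) (X : Finset V) (K : Finset ι) (c : V → ι) : Prop where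
  mem : ∀ ⦃v⦄, v ∈ X → c v ∈ K
  ne_of_adj : ∀ ⦃v⦄, v ∈ X → ∀ ⦃w⦄, w ∈ X → G.Adj v w → c v ≠ c w

theorem IsColoringOn.mono (hc : IsColoringOn G X K c) (h : A ⊆ X) : IsColoringOn G A K c :=
  ⟨fun _ hv => hc.mem (h hv), fun _ hv _ hw => hc.ne_of_adj (h hv) (h hw)⟩

variable [DecidableEq ι]

/-- The vertices of `X` with colour `i`. -/
def colorClass (X : Finset V) (c : V → ι) (i : ι) : Finset V :=
  {v ∈ X | c v = i}

/-- The subgraph of `G` induced by `X` has a proper colouring with colours in `K` whose classes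
all have exactly `s` vertices. -/
def EquitablyColorable (G : SimpleGraph V) (X : Finset V) (K : Finset ι) (s : ℕ) : Prop :=
  ∃ c : V → ι, IsColoringOn G X K c ∧ ∀ i ∈ K, #(colorClass X c i) = s

/-- Some vertex of class `i` has no neighbour in class `j`, so it may be recoloured `j`. -/
def Movable (G : SimpleGraph V) (X : Finset V) (c : V → ι) (i j : ι) : Prop :=
  ∃ v ∈ colorClass X c i, ∀ w ∈ colorClass X c j, ¬G.Adj v w

theorem mem_colorClass : v ∈ colorClass X c i ↔ v ∈ X ∧ c v = i :=
  mem_filter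

theorem colorClass_subset (X : Finset V) (c : V → ι) (i : ι) : colorClass X c i ⊆ X :=
  filter_subset _ _

theorem IsColoringOn.sum_card_colorClass (hc : IsColoringOn G X K c) :
    ∑ i ∈ K, #(colorClass X c i) = #X :=
  (card_eq_sum_card_fiberwise hc.mem).symm

theorem IsColoringOn.degOn_eq_sum (hc : IsColoringOn G X K c) (v : V) :
    degOn G X v = ∑ i ∈ K, degOn G (colorClass X c i) v := by
  classical
  rw [degOn, card_eq_sum_card_fiberwise fun w hw => hc.mem (mem_filter.1 hw).1]
  simp only [degOn, colorClass, filter_filter, and_comm]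

theorem EquitablyColorable.card_eq (h : EquitablyColorable G X K s) : #X = #K * s := by
  obtain ⟨c, hc, hcard⟩ := h
  rw [← hc.sum_card_colorClass, sum_const_nat hcard]

theorem IsColoringOn.restrict_colorClass (hc : IsColoringOn G X K c) (i : ι) :
    IsColoringOn G (colorClass X c i) {i} c :=
  ⟨fun _ hv => mem_singleton.2 (mem_colorClass.1 hv).2,
    (hc.mono (colorClass_subset X c i)).ne_of_adj⟩

theorem IsColoringOn.card_le_degOn (hc : IsColoringOn G X K c) (hSK : S ⊆ K)
    (hadj : ∀ i ∈ S, ∃ z ∈ colorClass X c i, G.Adj v z) : #S ≤ degOn G X v := by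
  rw [hc.degOn_eq_sum, card_eq_sum_ones]
  refine (sum_le_sum fun i hi => ?_).trans (sum_le_sum_of_subset hSK)
  obtain ⟨z, hz, hvz⟩ := hadj i hi
  exact degOn_pos hz hvz

variable [DecidableEq V]

theorem IsColoringOn.insert_update (hc : IsColoringOn G X K c) (hi : i ∈ K)
    (hfree : ∀ w ∈ colorClass X c i, ¬G.Adj y w) :
    IsColoringOn G (insert y X) K (update c y i) where
  mem v hv := by
    rcases eq_or_ne v y with rfl | hvy
    · rwa [update_self]
    · rw [update_of_ne hvy]
      exact hc.mem (mem_of_mem_insert_of_ne hv hvy)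
  ne_of_adj v hv w hw hvw := by
    rcases eq_or_ne v y with rfl | hvy
    · have hwv := hvw.ne'
      rw [update_self, update_of_ne hwv]
      exact fun h => hfree w (mem_colorClass.2 ⟨mem_of_mem_insert_of_ne hw hwv, h.symm⟩) hvw
    rw [update_of_ne hvy]
    replace hv := mem_of_mem_insert_of_ne hv hvy
    rcases eq_or_ne w y with rfl | hwy
    · rw [update_self]
      exact fun h => hfree v (mem_colorClass.2 ⟨hv, h⟩) hvw.symm
    · rw [update_of_ne hwy]
      exact hc.ne_of_adj hv (mem_of_mem_insert_of_ne hw hwy) hvw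

theorem colorClass_insert_update_self (X : Finset V) (c : V → ι) (y : V) (i : ι) :
    colorClass (insert y X) (update c y i) i = insert y (colorClass X c i) := by
  ext v
  rcases eq_or_ne v y with rfl | hv <;> simp [mem_colorClass, *]

theorem colorClass_insert_update_of_ne (hy : y ∉ X) (hji : j ≠ i) :
    colorClass (insert y X) (update c y i) j = colorClass X c j := by
  ext v
  rcases eq_or_ne v y with rfl | hv <;> simp [mem_colorClass, hji.symm, *]

theorem colorClass_erase (X : Finset V) (c : V → ι) (z : V) (i : ι) :
    colorClass (X.erase z) c i = (colorClass X c i).erase z :=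
  filter_erase _ _ _

theorem colorClass_erase_of_ne (X : Finset V) (hji : c z ≠ j) :
    colorClass (X.erase z) c j = colorClass X c j := by
  rw [colorClass_erase, erase_eq_of_notMem fun h => hji (mem_colorClass.1 h).2]

theorem card_colorClass_insert_update (hy : y ∉ X) (c : V → ι) (i j : ι) :
    #(colorClass (insert y X) (update c y i) j) =
      #(colorClass X c j) + if j = i then 1 else 0 := by
  split_ifs with hji
  · rw [hji, colorClass_insert_update_self,
      card_insert_of_notMem fun h => hy (colorClass_subset X c i h)]
  · rw [colorClass_insert_update_of_ne hy hji, add_zero]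

theorem card_colorClass_erase_add (hz : z ∈ X) (c : V → ι) (j : ι) :
    #(colorClass (X.erase z) c j) + (if j = c z then 1 else 0) = #(colorClass X c j) := by
  split_ifs with hj
  · rw [colorClass_erase, card_erase_add_one (mem_colorClass.2 ⟨hz, hj.symm⟩)]
  · rw [colorClass_erase_of_ne X (Ne.symm hj), add_zero]

theorem IsColoringOn.replace (hc : IsColoringOn G X K c) (hz : z ∈ colorClass X c i)
    (hsolo : ∀ w ∈ colorClass X c i, G.Adj y w → w = z) :
    IsColoringOn G (insert y (X.erase z)) K (update c y i) := by
  obtain ⟨hzX, rfl⟩ := mem_colorClass.1 hz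
  refine (hc.mono (erase_subset z X)).insert_update (hc.mem hzX) fun w hw hyw => ?_
  rw [colorClass_erase, mem_erase] at hw
  exact hw.1 (hsolo w hw.2 hyw)

theorem colorClass_replace_self (X : Finset V) (c : V → ι) (y z : V) (i : ι) :
    colorClass (insert y (X.erase z)) (update c y i) i = insert y ((colorClass X c i).erase z) := by
  rw [colorClass_insert_update_self, colorClass_erase]

theorem colorClass_replace_of_ne (hz : z ∈ colorClass X c i) (hy : y ∉ X) (hji : j ≠ i) :
    colorClass (insert y (X.erase z)) (update c y i) j = colorClass X c j := by
  obtain ⟨-, rfl⟩ := mem_colorClass.1 hz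
  rw [colorClass_insert_update_of_ne (fun h => hy (mem_of_mem_erase h)) hji,
    colorClass_erase_of_ne X hji.symm]

theorem card_colorClass_replace (hz : z ∈ colorClass X c i) (hy : y ∉ X) (j : ι) :
    #(colorClass (insert y (X.erase z)) (update c y i) j) = #(colorClass X c j) := by
  obtain ⟨hzX, rfl⟩ := mem_colorClass.1 hz
  rw [card_colorClass_insert_update fun h => hy (mem_of_mem_erase h), card_colorClass_erase_add hzX]

theorem insert_replace (hz : z ∈ X) (y : V) : insert z (insert y (X.erase z)) = insert y X := by
  rw [Finset.insert_comm, insert_erase hz]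

theorem notMem_replace (hz : z ∈ X) (hy : y ∉ X) : z ∉ insert y (X.erase z) := by
  simp [ne_of_mem_of_not_mem hz hy]

theorem IsColoringOn.piecewise (hc : IsColoringOn G A S c) (hd : IsColoringOn G B T d)
    (hST : Disjoint S T) : IsColoringOn G (A ∪ B) (S ∪ T) (A.piecewise c d) := by
  have hB : ∀ ⦃v⦄, v ∈ A ∪ B → v ∉ A → v ∈ B := fun v hv hvA => (mem_union.1 hv).resolve_left hvA
  refine ⟨fun v hv => ?_, fun v hv w hw hvw => ?_⟩
  · by_cases hvA : v ∈ A
    · simpa [hvA] using .inl (hc.mem hvA)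
    · simpa [hvA] using .inr (hd.mem (hB hv hvA))
  · by_cases hvA : v ∈ A <;> by_cases hwA : w ∈ A <;>
      simp only [Finset.piecewise, hvA, hwA, if_true, if_false]
    · exact hc.ne_of_adj hvA hwA hvw
    · exact hST.forall_ne_finset (hc.mem hvA) (hd.mem (hB hw hwA))
    · exact (hST.forall_ne_finset (hc.mem hwA) (hd.mem (hB hv hvA))).symm
    · exact hd.ne_of_adj (hB hv hvA) (hB hw hwA) hvw

theorem colorClass_piecewise_left (hd : IsColoringOn G B T d) (hST : Disjoint S T) (hi : i ∈ S) :
    colorClass (A ∪ B) (A.piecewise c d) i = colorClass A c i := by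
  ext v
  by_cases hvA : v ∈ A
  · simp [mem_colorClass, hvA]
  · have : v ∈ B → d v ≠ i := fun hvB => (hST.forall_ne_finset hi (hd.mem hvB)).symm
    simpa [mem_colorClass, hvA]

theorem colorClass_piecewise_right (hc : IsColoringOn G A S c) (hAB : Disjoint A B)
    (hST : Disjoint S T) (hi : i ∈ T) :
    colorClass (A ∪ B) (A.piecewise c d) i = colorClass B d i := by
  ext v
  by_cases hvA : v ∈ A
  · simp [mem_colorClass, hvA, disjoint_left.1 hAB hvA, hST.forall_ne_finset (hc.mem hvA) hi]
  · simp [mem_colorClass, hvA]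

theorem IsColoringOn.sdiff_colorClass (hc : IsColoringOn G X K c) (i : ι) :
    IsColoringOn G (X \ colorClass X c i) (K.erase i) c where
  mem v hv := by
    obtain ⟨hvX, hvi⟩ := mem_sdiff.1 hv
    exact mem_erase.2 ⟨fun h => hvi (mem_colorClass.2 ⟨hvX, h⟩), hc.mem hvX⟩
  ne_of_adj := (hc.mono sdiff_subset).ne_of_adj

theorem colorClass_sdiff_of_ne (X : Finset V) (c : V → ι) (hji : j ≠ i) :
    colorClass (X \ colorClass X c i) c j = colorClass X c j := by
  ext v
  simp only [mem_colorClass, mem_sdiff]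
  grind

theorem EquitablyColorable.union (hA : EquitablyColorable G A S s)
    (hB : EquitablyColorable G B T s) (hAB : Disjoint A B) (hST : Disjoint S T) :
    EquitablyColorable G (A ∪ B) (S ∪ T) s := by
  obtain ⟨c, hc, hcs⟩ := hA
  obtain ⟨d, hd, hds⟩ := hB
  refine ⟨A.piecewise c d, hc.piecewise hd hST, fun i hi => ?_⟩
  rcases mem_union.1 hi with hi | hi
  · rw [colorClass_piecewise_left hd hST hi, hcs i hi]
  · rw [colorClass_piecewise_right hc hAB hST hi, hds i hi]

end Coloring

section NearColoring

variable {V ι : Type*} [DecidableEq V] [DecidableEq ι] {G : SimpleGraph V} {X A : Finset V}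
  {R : ι → ι → Prop} {K S : Finset ι} {c : V → ι} {i j i₀ : ι} {s : ℕ} {y z : V}

/-- Vertices cascade along a path of movable classes from `i` to `i₀`, each making room for the
previous one, so that only the class `i₀` grows. -/
theorem Accessible.exists_insert (hS : Accessible R i₀ S) (hSK : S ⊆ K)
    (hc : IsColoringOn G X K c) (hR : ∀ i ∈ S, ∀ j ∈ S, R i j → Movable G X c i j) (hy : y ∉ X)
    (hi : i ∈ S) (hfree : ∀ w ∈ colorClass X c i, ¬G.Adj y w) :
    ∃ c' : V → ι, IsColoringOn G (insert y X) K c' ∧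
      ∀ j, #(colorClass (insert y X) c' j) = #(colorClass X c j) + if j = i₀ then 1 else 0 := by
  induction hS generalizing X c y i with
  | base =>
    obtain rfl := mem_singleton.1 hi
    exact ⟨_, hc.insert_update (singleton_subset_iff.1 hSK) hfree,
      card_colorClass_insert_update hy c i⟩
  | @step S l j _ hl hj hlj ih =>
    have hSK' : S ⊆ K := (subset_insert l S).trans hSK
    have hRS : ∀ i ∈ S, ∀ j ∈ S, R i j → Movable G X c i j := fun i hi j hj =>
      hR i (mem_insert_of_mem hi) j (mem_insert_of_mem hj)
    rcases mem_insert.1 hi with rfl | hi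
    swap
    · exact ih hSK' hc hRS hy hi hfree
    obtain ⟨v, hv, hvfree⟩ := hR i hi j (mem_insert_of_mem hj) hlj
    have hclass : ∀ k ∈ S, colorClass (insert y (X.erase v)) (update c y i) k = colorClass X c k :=
      fun k hk => colorClass_replace_of_ne hv hy (ne_of_mem_of_not_mem hk hl)
    have hvX : v ∈ X := colorClass_subset X c i hv
    obtain ⟨c', hc', hcard⟩ := ih hSK'
      (hc.replace hv fun w hw hyw => absurd hyw (hfree w hw))
      (fun k hk k' hk' h => by
        simpa only [Movable, hclass k hk, hclass k' hk'] using hRS k hk k' hk' h)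
      (notMem_replace hvX hy) hj (by rwa [hclass j hj])
    simp only [insert_replace hvX, card_colorClass_replace hv hy] at hc' hcard
    exact ⟨c', hc', hcard⟩

/-- A proper colouring of `A` whose classes all have `s` vertices, except that the class `i₀`,
which every class can reach by moves, lacks one vertex. -/
structure NearColoring (G : SimpleGraph V) (A : Finset V) (S : Finset ι) (s : ℕ) (i₀ : ι)
    (c : V → ι) : Prop where
  isColoringOn : IsColoringOn G A S c
  card_add : ∀ i ∈ S, #(colorClass A c i) + (if i = i₀ then 1 else 0) = s
  accessible : Accessible (Movable G A c) i₀ S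

namespace NearColoring

theorem equitablyColorable_insert (h : NearColoring G A S s i₀ c) (hy : y ∉ A) (hi : i ∈ S)
    (hfree : ∀ w ∈ colorClass A c i, ¬G.Adj y w) : EquitablyColorable G (insert y A) S s := by
  obtain ⟨c', hc', hcard⟩ := h.accessible.exists_insert Subset.rfl h.isColoringOn
    (fun _ _ _ _ => id) hy hi hfree
  exact ⟨c', hc', fun i hi => by rw [hcard, h.card_add i hi]⟩

theorem equitablyColorable_insert_of_solo (h : NearColoring G A S s i₀ c)
    (hSi : Accessible (Movable G A c) i₀ (S.erase i)) (hy : y ∉ A) (hz : z ∈ colorClass A c i)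
    (hsolo : ∀ w ∈ colorClass A c i, G.Adj y w → w = z) (hj : j ∈ S.erase i)
    (hfree : ∀ w ∈ colorClass A c j, ¬G.Adj z w) : EquitablyColorable G (insert y A) S s := by
  have hclass : ∀ k ∈ S.erase i,
      colorClass (insert y (A.erase z)) (update c y i) k = colorClass A c k :=
    fun k hk => colorClass_replace_of_ne hz hy (ne_of_mem_erase hk)
  have hzA : z ∈ A := colorClass_subset A c i hz
  obtain ⟨c', hc', hcard⟩ := hSi.exists_insert (erase_subset i S)
    (h.isColoringOn.replace hz hsolo)
    (fun k hk k' hk' hR => by simpa only [Movable, hclass k hk, hclass k' hk'] using hR)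
    (notMem_replace hzA hy) hj (by rwa [hclass j hj])
  simp only [insert_replace hzA, card_colorClass_replace hz hy] at hc' hcard
  exact ⟨c', hc', fun i hi => by rw [hcard, h.card_add i hi]⟩

theorem replace (h : NearColoring G A S s i₀ c) (hi : i ∈ S)
    (hterm : S = {i} ∨ Accessible (Movable G A c) i₀ (S.erase i)) (hy : y ∉ A)
    (hz : z ∈ colorClass A c i) (hsolo : ∀ w ∈ colorClass A c i, G.Adj y w → w = z)
    (hfull : ∀ j ∈ S.erase i, ∃ w ∈ colorClass A c j, G.Adj z w) :
    NearColoring G (insert y (A.erase z)) S s i₀ (update c y i) := by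
  refine ⟨h.isColoringOn.replace hz hsolo, fun j hj => ?_, ?_⟩
  · rw [card_colorClass_replace hz hy, h.card_add j hj]
  rcases hterm with rfl | hSi
  · rw [mem_singleton.1 h.accessible.mem]
    exact .base
  have hclass : ∀ k ∈ S.erase i,
      colorClass (insert y (A.erase z)) (update c y i) k = colorClass A c k :=
    fun k hk => colorClass_replace_of_ne hz hy (ne_of_mem_erase hk)
  obtain ⟨j, hj, v, hv, hvfree⟩ := h.accessible.exists_rel_of_erase hi hSi
  have hvz : v ≠ z := by
    rintro rfl
    obtain ⟨w, hw, hvw⟩ := hfull j hj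
    exact hvfree w hw hvw
  rw [← insert_erase hi]
  refine .step (hSi.mono fun k hk k' hk' hR => ?_) (notMem_erase i S) hj ⟨v, ?_, ?_⟩
  · simpa only [Movable, hclass k hk, hclass k' hk'] using hR
  · rw [colorClass_replace_self]
    exact mem_insert_of_mem (mem_erase.2 ⟨hvz, hv⟩)
  · rwa [hclass j hj]

end NearColoring

end NearColoring

section Split

variable {V ι : Type*} [DecidableEq V] [DecidableEq ι] {G : SimpleGraph V} {X A C : Finset V}
  {K S : Finset ι} {c d : V → ι} {i i₀ l : ι} {s : ℕ} {x y : V}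

theorem NearColoring.exists_union (h : NearColoring G A S s i₀ c) (hl : l ∉ S)
    (hAC : Disjoint A C) (hd : IsColoringOn G C {l} d) (hC : #C = s) (hi : i ∈ S) (hy : y ∈ C)
    (hfree : ∀ w ∈ colorClass A c i, ¬G.Adj y w) :
    ∃ c', NearColoring G (A ∪ C) (insert l S) s i₀ c' := by
  have hSl : Disjoint S {l} := disjoint_singleton_right.2 hl
  have hold : ∀ j ∈ S, colorClass (A ∪ C) (A.piecewise c d) j = colorClass A c j :=
    fun j hj => colorClass_piecewise_left hd hSl hj
  have hnew : colorClass (A ∪ C) (A.piecewise c d) l = C := by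
    rw [colorClass_piecewise_right h.isColoringOn hAC hSl (mem_singleton_self l)]
    exact filter_true_of_mem fun v hv => mem_singleton.1 (hd.mem hv)
  refine ⟨A.piecewise c d, ?_, fun j hj => ?_, .step (h.accessible.mono ?_) hl hi ⟨y, ?_, ?_⟩⟩
  · simpa only [union_singleton] using h.isColoringOn.piecewise hd hSl
  · rcases mem_insert.1 hj with rfl | hj
    · rw [hnew, hC, if_neg (ne_of_mem_of_not_mem h.accessible.mem hl).symm, add_zero]
    · rw [hold j hj, h.card_add j hj]
  · intro j hj k hk hjk
    simpa only [Movable, hold j hj, hold k hk] using hjk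
  · rwa [hnew]
  · rwa [hold i hi]

/-- `A` is nearly coloured by `S`, and the rest of `X` except for a single vertex is equitably
coloured by the remaining colours of `K`. -/
structure IsSplit (G : SimpleGraph V) (X : Finset V) (K : Finset ι) (s : ℕ) (A : Finset V)
    (S : Finset ι) : Prop where
  subset : A ⊆ X
  palette_subset : S ⊆ K
  exists_near : ∃ i₀ c, NearColoring G A S s i₀ c
  exists_rest : ∃ x ∈ X \ A, EquitablyColorable G ((X \ A).erase x) (K \ S) s

theorem EquitablyColorable.of_insert_of_erase (hAX : A ⊆ X) (hSK : S ⊆ K) (hx : x ∈ X \ A)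
    (hA : EquitablyColorable G (insert x A) S s)
    (hrest : EquitablyColorable G ((X \ A).erase x) (K \ S) s) : EquitablyColorable G X K s := by
  have hdisj : Disjoint (insert x A) ((X \ A).erase x) :=
    disjoint_insert_left.2 ⟨notMem_erase x _, disjoint_sdiff.mono_right (erase_subset x _)⟩
  have hX : insert x A ∪ (X \ A).erase x = X := by
    rw [insert_union, ← union_insert, insert_erase hx, union_sdiff_of_subset hAX]
  have h := hA.union hrest hdisj disjoint_sdiff
  rwa [hX, union_sdiff_of_subset hSK] at h

theorem IsSplit.exists_larger (h : IsSplit G X K s A S) (hX : ¬EquitablyColorable G X K s)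
    (hc : NearColoring G A S s i₀ c) (hy : y ∈ X \ A) (hi : i ∈ S)
    (hfree : ∀ w ∈ colorClass A c i, ¬G.Adj y w) :
    ∃ A' S', IsSplit G X K s A' S' ∧ #S < #S' := by
  obtain ⟨x, hx, hrest⟩ := h.exists_rest
  have hyx : y ≠ x := by
    rintro rfl
    exact hX (.of_insert_of_erase h.subset h.palette_subset hy
      (hc.equitablyColorable_insert (mem_sdiff.1 hy).2 hi hfree) hrest)
  obtain ⟨d, hd, hcard⟩ := hrest
  set B := (X \ A).erase x
  have hyB : y ∈ B := mem_erase.2 ⟨hyx, hy⟩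
  obtain ⟨hlK, hlS⟩ := mem_sdiff.1 (hd.mem hyB)
  set C := colorClass B d (d y)
  have hCB : C ⊆ B := colorClass_subset B d (d y)
  have hCX : C ⊆ X \ A := hCB.trans (erase_subset x _)
  obtain ⟨c', hc'⟩ := hc.exists_union hlS (disjoint_sdiff.mono_right hCX)
    (hd.restrict_colorClass (d y)) (hcard _ (hd.mem hyB)) hi (mem_colorClass.2 ⟨hyB, rfl⟩) hfree
  have hrestX : X \ (A ∪ C) = (X \ A) \ C := (sdiff_sdiff_left ..).symm
  have hrestK : K \ insert (d y) S = (K \ S).erase (d y) := sdiff_insert ..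
  refine ⟨A ∪ C, insert (d y) S, ⟨union_subset h.subset (hCX.trans sdiff_subset),
    insert_subset hlK h.palette_subset, ⟨i₀, c', hc'⟩, x, ?_, d, ?_, fun j hj => ?_⟩, ?_⟩
  · rw [hrestX]
    exact mem_sdiff.2 ⟨hx, fun hxC => notMem_erase x _ (hCB hxC)⟩
  · rw [hrestX, hrestK, ← erase_sdiff_comm]
    exact hd.sdiff_colorClass (d y)
  · rw [hrestK] at hj
    rw [hrestX, ← erase_sdiff_comm, colorClass_sdiff_of_ne B d (ne_of_mem_erase hj),
      hcard j (mem_of_mem_erase hj)]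
  · rw [card_insert_of_notMem hlS]
    exact Nat.lt_succ_self _

/-- A near colouring of `A` by `S` such that every vertex of `X \ A` has neighbours in all classes,
and the rest of `X` can be equitably coloured whichever of its vertices is left out. -/
structure IsSaturated (G : SimpleGraph V) (X : Finset V) (K : Finset ι) (s : ℕ) (A : Finset V)
    (S : Finset ι) (i₀ : ι) (c : V → ι) : Prop where
  subset : A ⊆ X
  palette_subset : S ⊆ K
  near : NearColoring G A S s i₀ c
  full : ∀ y ∈ X \ A, ∀ i ∈ S, ∃ z ∈ colorClass A c i, G.Adj y z
  rest : ∀ y ∈ X \ A, EquitablyColorable G ((X \ A).erase y) (K \ S) s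
  nonempty : (X \ A).Nonempty

theorem OreCondition.erase_sdiff (hO : OreCondition G X #K) (hAX : A ⊆ X) (hSK : S ⊆ K)
    (hS : ∀ v ∈ X \ A, #S ≤ degOn G A v) (y : V) : OreCondition G ((X \ A).erase y) #(K \ S) := by
  intro v hv w hw hvw
  have hvX := mem_of_mem_erase hv
  have hwX := mem_of_mem_erase hw
  have hcard := card_sdiff_add_card_eq_card hSK
  have hOre := hO (mem_sdiff.1 hvX).1 (mem_sdiff.1 hwX).1 hvw
  have hdeg (v : V) : degOn G ((X \ A).erase y) v + degOn G A v ≤ degOn G X v := by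
    have := degOn_sdiff_add_degOn (G := G) hAX v
    have := degOn_mono (G := G) (erase_subset y (X \ A)) v
    lia
  have := hdeg v
  have := hdeg w
  have := hS v hvX
  have := hS w hwX
  lia

theorem IsSplit.exists_isSaturated (h : IsSplit G X K s A S) (hX : ¬EquitablyColorable G X K s)
    (hmax : ∀ A' S', IsSplit G X K s A' S' → #S' ≤ #S) (hO : OreCondition G X #K)
    (ih : ∀ K' ⊂ K, ∀ B : Finset V, OreCondition G B #K' → #B = #K' * s →
      EquitablyColorable G B K' s) :
    ∃ i₀ c, IsSaturated G X K s A S i₀ c := by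
  obtain ⟨i₀, c, hc⟩ := h.exists_near
  obtain ⟨x, hx, hrest⟩ := h.exists_rest
  have hfull : ∀ y ∈ X \ A, ∀ i ∈ S, ∃ z ∈ colorClass A c i, G.Adj y z := by
    intro y hy i hi
    by_contra! hfree
    obtain ⟨A', S', h', hlt⟩ := h.exists_larger hX hc hy hi hfree
    exact hlt.not_ge (hmax A' S' h')
  refine ⟨i₀, c, h.subset, h.palette_subset, hc, hfull, fun y hy => ih _ ?_ _ ?_ ?_, x, hx⟩
  · exact sdiff_ssubset h.palette_subset ⟨i₀, hc.accessible.mem⟩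
  · exact hO.erase_sdiff h.subset h.palette_subset
      (fun v hv => hc.isColoringOn.card_le_degOn Subset.rfl (hfull v hv)) y
  · rw [← hrest.card_eq, card_erase_of_mem hx, card_erase_of_mem hy]

end Split

section Swap

variable {V ι : Type*} [DecidableEq V] {G : SimpleGraph V} {X A : Finset V}
  {K S : Finset ι} {c : V → ι} {i j i₀ : ι} {s : ℕ} {y z : V}

/-- The lexicographic potential of a split: the number of its colours, then (twice) the number of
edges within `X \ A`, then the degree sum of `A`. -/
noncomputable def potential (G : SimpleGraph V) (X A : Finset V) (S : Finset ι) : ℕ ×ₗ ℕ ×ₗ ℕ :=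
  toLex (#S, toLex (∑ v ∈ X \ A, degOn G (X \ A) v, ∑ v ∈ A, degOn G X v))

theorem card_le_of_potential_le {A' : Finset V} {S' : Finset ι}
    (h : potential G X A' S' ≤ potential G X A S) : #S' ≤ #S := by
  rcases Prod.Lex.toLex_le_toLex.1 h with h | h
  exacts [h.le, h.1.le]

theorem sdiff_swap (hAX : A ⊆ X) (hz : z ∈ A) (hy : y ∉ A) :
    X \ insert y (A.erase z) = insert z ((X \ A).erase y) := by
  rw [sdiff_insert, sdiff_erase (hAX hz), erase_insert_of_ne (ne_of_mem_of_not_mem hz hy)]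

theorem sum_degOn_swap_le (hAX : A ⊆ X) (hz : z ∈ A) (hy : y ∈ X \ A) (hzy : G.Adj z y)
    (hle : potential G X (insert y (A.erase z)) S ≤ potential G X A S) :
    degOn G (X \ A) z ≤ degOn G (X \ A) y + 1 ∧
      (degOn G X z < degOn G X y → degOn G (X \ A) z ≤ degOn G (X \ A) y) := by
  have hyA := (mem_sdiff.1 hy).2
  have hin := sum_degOn_swap hy (fun h => (mem_sdiff.1 h).2 hz) hzy
  have hout : ∑ v ∈ insert y (A.erase z), degOn G X v + degOn G X z =
      ∑ v ∈ A, degOn G X v + degOn G X y := by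
    rw [sum_insert fun h => hyA (mem_of_mem_erase h), ← sum_erase_add A _ hz]
    ring
  simp only [potential, Prod.Lex.toLex_le_toLex, lt_irrefl, false_or, true_and,
    sdiff_swap hAX hz hyA] at hle
  lia

variable [DecidableEq ι]

theorem IsSplit.exists_maximal (h : IsSplit G X K s A S) :
    ∃ A S, IsSplit G X K s A S ∧
      ∀ A' S', IsSplit G X K s A' S' → potential G X A' S' ≤ potential G X A S := by
  have hfin : {p : Finset V × Finset ι | IsSplit G X K s p.1 p.2}.Finite :=
    (X.powerset ×ˢ K.powerset).finite_toSet.subset fun p hp =>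
      mem_product.2 ⟨mem_powerset.2 hp.subset, mem_powerset.2 hp.palette_subset⟩
  obtain ⟨p, hp, hmax⟩ := Set.exists_max_image _ (fun p => potential G X p.1 p.2) hfin ⟨(A, S), h⟩
  exact ⟨p.1, p.2, hp, fun A' S' h' => hmax (A', S') h'⟩

namespace IsSaturated

theorem exists_adj_of_solo (h : IsSaturated G X K s A S i₀ c) (hX : ¬EquitablyColorable G X K s)
    (hterm : S = {i} ∨ Accessible (Movable G A c) i₀ (S.erase i)) (hy : y ∈ X \ A)
    (hz : z ∈ colorClass A c i) (hsolo : ∀ w ∈ colorClass A c i, G.Adj y w → w = z)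
    (hj : j ∈ S.erase i) : ∃ w ∈ colorClass A c j, G.Adj z w := by
  by_contra! hfree
  rcases hterm with rfl | hSi
  · simp at hj
  · exact hX (.of_insert_of_erase h.subset h.palette_subset hy
      (h.near.equitablyColorable_insert_of_solo hSi (mem_sdiff.1 hy).2 hz hsolo hj hfree)
      (h.rest y hy))

theorem isSplit_swap (h : IsSaturated G X K s A S i₀ c) (hX : ¬EquitablyColorable G X K s)
    (hi : i ∈ S) (hterm : S = {i} ∨ Accessible (Movable G A c) i₀ (S.erase i)) (hy : y ∈ X \ A)
    (hz : z ∈ colorClass A c i) (hsolo : ∀ w ∈ colorClass A c i, G.Adj y w → w = z) :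
    IsSplit G X K s (insert y (A.erase z)) S := by
  obtain ⟨hyX, hyA⟩ := mem_sdiff.1 hy
  have hzA : z ∈ A := colorClass_subset A c i hz
  have hzB : z ∉ (X \ A).erase y := fun hz' => (mem_sdiff.1 (mem_of_mem_erase hz')).2 hzA
  refine ⟨insert_subset hyX ((erase_subset z A).trans h.subset), h.palette_subset,
    ⟨i₀, _, h.near.replace hi hterm hyA hz hsolo fun j hj =>
      h.exists_adj_of_solo hX hterm hy hz hsolo hj⟩, z, ?_⟩
  rw [sdiff_swap h.subset hzA hyA, erase_insert hzB]
  exact ⟨mem_insert_self _ _, h.rest y hy⟩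

end IsSaturated

end Swap

section Weights

variable {q b n d x C : ℕ}

theorem one_le_cast_div (hC : 0 < C) (hCq : C ≤ q) : 1 ≤ (q / C : ℚ) :=
  (one_le_div₀ (by positivity)).2 (mod_cast hCq)

theorem add_le_mul_div (hn : n < q) (hx : 1 ≤ x) (hC : 0 < C) (hCd : C ≤ d + 1) (hCq : C ≤ q) :
    (n + x : ℚ) ≤ (x + d) * (q / C) := by
  have hq : (q : ℚ) ≤ (d + 1) * (q / C) := by
    rw [mul_div_left_comm]
    exact le_mul_of_one_le_right (by positivity) (mod_cast one_le_cast_div hC hCd)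
  have hx' : (x - 1 : ℚ) ≤ (x - 1) * (q / C) :=
    le_mul_of_one_le_right (sub_nonneg.2 (mod_cast hx)) (one_le_cast_div hC hCq)
  have hn' : (n + 1 : ℚ) ≤ q := mod_cast hn
  linarith

theorem add_add_le_mul_div_add (hC : 0 < C) (hCb : C + b ≤ q) :
    (q + b + x : ℚ) ≤ (x + C) * (q / C) + (q + b - C) * (2 * (q / (2 * q + x))) := by
  have hCb' : (C + b : ℚ) ≤ q := mod_cast hCb
  have hC' : (0 : ℚ) < C := mod_cast hC
  have hq : (0 : ℚ) < q := by linarith [b.cast_nonneg (α := ℚ)]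
  have hα : (1 + b / q : ℚ) ≤ q / C := by
    rw [le_div_iff₀ hC', add_mul, one_mul, div_mul_eq_mul_div]
    have : (b * C / q : ℚ) ≤ b := (div_le_iff₀ hq).2 (by gcongr; linarith)
    linarith
  have hβ : (1 : ℚ) ≤ x / q + 4 * (q / (2 * q + x)) := by
    rw [← mul_div_assoc, div_add_div _ _ hq.ne' (by positivity), one_le_div₀ (by positivity)]
    nlinarith [x.cast_nonneg (α := ℚ)]
  have hβ0 : (0 : ℚ) ≤ q / (2 * q + x) := by positivity
  set β : ℚ := q / (2 * q + x)
  calc (q + b + x : ℚ) ≤ q + x + b * (x / q + 4 * β) := by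
        nlinarith [b.cast_nonneg (α := ℚ)]
    _ = x * (1 + b / q) + q + 2 * b * (2 * β) := by ring
    _ ≤ x * (q / C) + C * (q / C) + (q + b - C) * (2 * β) := by
        rw [mul_div_cancel₀ _ hC'.ne']
        gcongr
        linarith
    _ = _ := by ring

theorem le_mul_add_mul {p t : ℕ} {α β : ℚ} (hpt : p ≤ t) (hα : 0 < p → 1 ≤ α)
    (hβ : p < t → 1 ≤ β) : (t : ℚ) ≤ p * α + (t - p) * β := by
  have hp : (p : ℚ) ≤ p * α := by
    rcases p.eq_zero_or_pos with rfl | hp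
    · simp
    · exact le_mul_of_one_le_right (by positivity) (hα hp)
  have ht : (t - p : ℚ) ≤ (t - p) * β := by
    rcases hpt.eq_or_lt with rfl | hlt
    · simp
    · exact le_mul_of_one_le_right (sub_nonneg.2 (mod_cast hpt)) (hβ hlt)
  linarith

/-- To be read with a vertex `y ∉ A` of degree `D`, of which `d` outside `A`, in mind: `A` has `m`
classes, `p` of the `t` terminal ones contain a unique neighbour of `y`, and `C` and `E` bound the
degrees outside `A` of these unique neighbours and of all neighbours in terminal classes. -/
theorem le_mul_div_add_mul_div {m t p D E : ℕ} (hpt : p ≤ t) (hd : m + t + d ≤ D + p)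
    (hE : E + D = m + 2 * q + t) (hE0 : p < t → 0 < E) (hC : 0 < p → 0 < C ∧ C + D ≤ m + 2 * q)
    (hCd : C ≤ d + 1) (hCd' : m + q ≤ D → C ≤ d) :
    (t : ℚ) ≤ p * (q / C) + (t - p) * (2 * (q / E)) := by
  have hα : 0 < p → 1 ≤ (q / C : ℚ) := fun hp => one_le_cast_div (hC hp).1 (by have := hC hp; lia)
  rcases le_or_gt E (2 * q) with hEq | hEq
  · refine le_mul_add_mul hpt hα fun hlt => ?_
    rw [← mul_div_assoc, one_le_div₀ (mod_cast hE0 hlt)]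
    exact_mod_cast hEq
  have hpt' : (p : ℚ) ≤ t := mod_cast hpt
  obtain ⟨x, rfl⟩ := Nat.exists_eq_add_of_le hEq.le
  obtain ⟨n, rfl⟩ := Nat.exists_eq_add_of_le (show m ≤ D by lia)
  obtain rfl : t = n + x := by lia
  have hp : x + d ≤ p := by lia
  obtain ⟨hC0, hCD⟩ := hC (by lia)
  specialize hα (by lia)
  push_cast at hpt' ⊢
  rcases lt_or_ge n q with hn | hn
  · calc (n + x : ℚ) ≤ (x + d) * (q / C) := add_le_mul_div hn (by lia) hC0 hCd (by lia)
      _ ≤ p * (q / C) := by gcongr; exact_mod_cast hp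
      _ ≤ _ := le_add_of_nonneg_right (mul_nonneg (sub_nonneg.2 hpt') (by positivity))
  obtain ⟨b, rfl⟩ := Nat.exists_eq_add_of_le hn
  have hxC : (x + C : ℚ) ≤ p := by have := hCd' (by lia); exact_mod_cast (by lia : x + C ≤ p)
  have hβ : 2 * (q / (2 * q + x) : ℚ) ≤ 1 := by
    rw [← mul_div_assoc]
    exact div_le_one_of_le₀ (by simp) (by positivity)
  push_cast
  calc (q + b + x : ℚ) ≤ (x + C) * (q / C) + (q + b - C) * (2 * (q / (2 * q + x))) :=
        add_add_le_mul_div_add hC0 (by lia)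
    _ ≤ p * (q / C) + (q + b + x - p) * (2 * (q / (2 * q + x))) := by
        nlinarith [mul_nonneg (sub_nonneg.2 hxC) (sub_nonneg.2 (hβ.trans hα))]

end Weights

section Discharging

variable {V ι : Type*} {G : SimpleGraph V} {X A B U : Finset V} {C q : ℕ} {y : V}

open Classical in
/-- The charge that `y` receives from `U` when every vertex divides the charge `q` evenly among
its neighbours in `B`. -/
noncomputable def charge (G : SimpleGraph V) (B U : Finset V) (q : ℕ) (y : V) : ℚ :=
  ∑ z ∈ U with G.Adj y z, (q / degOn G B z : ℚ)

theorem sum_charge_le (G : SimpleGraph V) (B U : Finset V) (q : ℕ) :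
    ∑ y ∈ B, charge G B U q y ≤ #U * q := by
  classical
  calc ∑ y ∈ B, charge G B U q y = ∑ z ∈ U, ∑ y ∈ B with G.Adj z y, (q / degOn G B z : ℚ) :=
        sum_comm' fun y z => by simp only [mem_filter, G.adj_comm]; tauto
    _ = ∑ z ∈ U, degOn G B z * (q / degOn G B z : ℚ) := by
        simp only [sum_const, nsmul_eq_mul, degOn]
    _ ≤ ∑ _z ∈ U, (q : ℚ) := sum_le_sum fun z _ => by
        rcases (degOn G B z).eq_zero_or_pos with h | h
        · simp [h]
        · exact (mul_div_cancel₀ _ (by positivity)).le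
    _ = #U * q := by simp

theorem degOn_mul_div_le_charge (hy : y ∈ B) (hC : ∀ z ∈ U, G.Adj y z → degOn G B z ≤ C) :
    degOn G U y * (q / C : ℚ) ≤ charge G B U q y := by
  classical
  rw [degOn, ← nsmul_eq_mul]
  refine card_nsmul_le_sum _ _ _ fun z hz => ?_
  obtain ⟨hzU, hyz⟩ := mem_filter.1 hz
  have hpos := degOn_pos hy hyz.symm
  have := hC z hzU hyz
  gcongr

variable [DecidableEq ι] {S T : Finset ι} {c : V → ι} {s : ℕ}

theorem card_le_of_card_le_sum_charge (hT : T.Nonempty) (hs : ∀ i ∈ T, #(colorClass A c i) ≤ s)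
    (hB : ∀ y ∈ B, (#T : ℚ) ≤ ∑ i ∈ T, charge G B (colorClass A c i) q y) : #B ≤ q * s := by
  have h : (#T * #B : ℚ) ≤ #T * (q * s : ℕ) := by
    calc (#T * #B : ℚ) = ∑ _y ∈ B, (#T : ℚ) := by simp [mul_comm]
      _ ≤ ∑ y ∈ B, ∑ i ∈ T, charge G B (colorClass A c i) q y := sum_le_sum hB
      _ = ∑ i ∈ T, ∑ y ∈ B, charge G B (colorClass A c i) q y := sum_comm
      _ ≤ ∑ _i ∈ T, (s * q : ℚ) := sum_le_sum fun i hi =>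
          (sum_charge_le G B _ q).trans (by gcongr; exact hs i hi)
      _ = #T * (q * s : ℕ) := by push_cast; simp [mul_comm]
  exact_mod_cast le_of_mul_le_mul_left h (mod_cast hT.card_pos)

/-- A class of `T` that the filter does not count contains at least two neighbours of `y`. -/
theorem IsColoringOn.card_add_card_le_degOn (hc : IsColoringOn G A S c) (hTS : T ⊆ S)
    (hfull : ∀ i ∈ S, ∃ z ∈ colorClass A c i, G.Adj y z) :
    #S + #T ≤ degOn G A y + #{i ∈ T | degOn G (colorClass A c i) y = 1} := by
  have hpos : ∀ i ∈ S, 1 ≤ degOn G (colorClass A c i) y := fun i hi => by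
    obtain ⟨z, hz, hyz⟩ := hfull i hi
    exact degOn_pos hz hyz
  rw [hc.degOn_eq_sum, ← sum_sdiff hTS, ← card_sdiff_add_card_eq_card hTS, add_assoc, add_assoc,
    card_filter, ← sum_add_distrib, card_eq_sum_ones, card_eq_sum_ones T, ← sum_add_distrib]
  refine add_le_add (sum_le_sum fun i hi => hpos i (mem_sdiff.1 hi).1) (sum_le_sum fun i hi => ?_)
  have := hpos i (hTS hi)
  split_ifs <;> lia

theorem mul_add_mul_le_sum_charge {α β : ℚ} (hfull : ∀ i ∈ T, 0 < degOn G (colorClass A c i) y)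
    (hα : ∀ i ∈ T, degOn G (colorClass A c i) y = 1 → α ≤ charge G B (colorClass A c i) q y)
    (hβ : ∀ i ∈ T, 2 ≤ degOn G (colorClass A c i) y → β ≤ charge G B (colorClass A c i) q y) :
    #{i ∈ T | degOn G (colorClass A c i) y = 1} * α +
        (#T - #{i ∈ T | degOn G (colorClass A c i) y = 1}) * β ≤
      ∑ i ∈ T, charge G B (colorClass A c i) q y := by
  rw [← sum_filter_add_sum_filter_not T fun i => degOn G (colorClass A c i) y = 1,
    ← card_filter_add_card_filter_not (s := T) fun i => degOn G (colorClass A c i) y = 1]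
  push_cast
  rw [add_sub_cancel_left, ← nsmul_eq_mul, ← nsmul_eq_mul]
  refine add_le_add (card_nsmul_le_sum _ _ _ fun i hi => ?_)
    (card_nsmul_le_sum _ _ _ fun i hi => ?_)
  · exact hα i (mem_filter.1 hi).1 (mem_filter.1 hi).2
  · obtain ⟨hiT, hi1⟩ := mem_filter.1 hi
    exact hβ i hiT (by have := hfull i hiT; lia)

theorem IsColoringOn.card_le_sum_charge [DecidableEq V] {E : ℕ} (hc : IsColoringOn G A S c)
    (hTS : T ⊆ S) (hAX : A ⊆ X) (hy : y ∈ X \ A)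
    (hfull : ∀ i ∈ S, ∃ z ∈ colorClass A c i, G.Adj y z)
    (hE : E + degOn G X y = #S + 2 * q + #T)
    (hall : ∀ i ∈ T, ∀ z ∈ colorClass A c i, G.Adj y z → degOn G (X \ A) z ≤ E)
    (hsolo : ∀ i ∈ T, degOn G (colorClass A c i) y = 1 →
      C + degOn G X y ≤ #S + 2 * q ∧ ∀ z ∈ colorClass A c i, G.Adj y z → degOn G (X \ A) z ≤ C)
    (hCd : C ≤ degOn G (X \ A) y + 1)
    (hCd' : #S + q ≤ degOn G X y → C ≤ degOn G (X \ A) y) :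
    (#T : ℚ) ≤ ∑ i ∈ T, charge G (X \ A) (colorClass A c i) q y := by
  have hadj : ∀ i ∈ T, ∃ z ∈ colorClass A c i, G.Adj y z ∧ 0 < degOn G (X \ A) z := fun i hi => by
    obtain ⟨z, hz, hyz⟩ := hfull i (hTS hi)
    exact ⟨z, hz, hyz, degOn_pos hy hyz.symm⟩
  have hd : #S + #T + degOn G (X \ A) y ≤
      degOn G X y + #{i ∈ T | degOn G (colorClass A c i) y = 1} := by
    have := hc.card_add_card_le_degOn hTS hfull
    have := degOn_sdiff_add_degOn (G := G) hAX y
    lia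
  have hE0 : #{i ∈ T | degOn G (colorClass A c i) y = 1} < #T → 0 < E := fun hlt => by
    obtain ⟨i, hi⟩ := card_pos.1 (Nat.zero_lt_of_lt hlt)
    obtain ⟨z, hz, hyz, hpos⟩ := hadj i hi
    exact hpos.trans_le (hall i hi z hz hyz)
  have hC : 0 < #{i ∈ T | degOn G (colorClass A c i) y = 1} →
      0 < C ∧ C + degOn G X y ≤ #S + 2 * q := fun hlt => by
    obtain ⟨i, hi⟩ := card_pos.1 hlt
    obtain ⟨hiT, hi1⟩ := mem_filter.1 hi
    obtain ⟨z, hz, hyz, hpos⟩ := hadj i hiT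
    exact ⟨hpos.trans_le ((hsolo i hiT hi1).2 z hz hyz), (hsolo i hiT hi1).1⟩
  refine (le_mul_div_add_mul_div (card_filter_le T _) hd hE hE0 hC hCd hCd').trans
    (mul_add_mul_le_sum_charge (fun i hi => ?_) (fun i hi hi1 => ?_) fun i hi hi2 => ?_)
  · obtain ⟨z, hz, hyz, -⟩ := hadj i hi
    exact degOn_pos hz hyz
  · have := degOn_mul_div_le_charge (q := q) hy (hsolo i hi hi1).2
    rwa [hi1, Nat.cast_one, one_mul] at this
  · refine le_trans ?_ (degOn_mul_div_le_charge (q := q) hy (hall i hi))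
    gcongr
    exact_mod_cast hi2

/-- The degree conditions on the neighbours of `y ∈ X \ A` in the classes of `T` under which `y`
receives charge at least `#T`: a general one, and a stronger one for the only neighbour of `y` in
a class. -/
structure DischargingBounds [DecidableEq V] (G : SimpleGraph V) (X A : Finset V) (c : V → ι)
    (S T : Finset ι) (q : ℕ) (y : V) : Prop where
  degOn_add_le : ∀ i ∈ T, ∀ z ∈ colorClass A c i, G.Adj y z →
    degOn G (X \ A) z + degOn G X y ≤ #S + 2 * q + #T
  degOn_add_le_of_solo : ∀ i ∈ T, degOn G (colorClass A c i) y = 1 →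
    ∀ z ∈ colorClass A c i, G.Adj y z →
      degOn G (X \ A) z + degOn G X y ≤ #S + 2 * q ∧
      degOn G (X \ A) z ≤ degOn G (X \ A) y + 1 ∧
      (#S + q ≤ degOn G X y → degOn G (X \ A) z ≤ degOn G (X \ A) y)

theorem DischargingBounds.card_le_sum_charge [DecidableEq V]
    (h : DischargingBounds G X A c S T q y) (hc : IsColoringOn G A S c) (hTS : T ⊆ S) (hAX : A ⊆ X)
    (hy : y ∈ X \ A) (hfull : ∀ i ∈ S, ∃ z ∈ colorClass A c i, G.Adj y z) :
    (#T : ℚ) ≤ ∑ i ∈ T, charge G (X \ A) (colorClass A c i) q y := by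
  rcases T.eq_empty_or_nonempty with rfl | ⟨i, hi⟩
  · simp
  obtain ⟨z, hz, hyz⟩ := hfull i (hTS hi)
  have hle := h.degOn_add_le i hi z hz hyz
  refine hc.card_le_sum_charge hTS hAX hy hfull (E := #S + 2 * q + #T - degOn G X y)
    (C := min (if #S + q ≤ degOn G X y then degOn G (X \ A) y else degOn G (X \ A) y + 1)
      (#S + 2 * q - degOn G X y)) (by lia) (fun j hj w hw hyw => ?_) (fun j hj hj1 => ?_) (by lia)
    (by lia)
  · have := h.degOn_add_le j hj w hw hyw
    lia
  · obtain ⟨w, hw, hyw⟩ := hfull j (hTS hj)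
    have := h.degOn_add_le_of_solo j hj hj1 w hw hyw
    refine ⟨by lia, fun w' hw' hyw' => ?_⟩
    have := h.degOn_add_le_of_solo j hj hj1 w' hw' hyw'
    lia

end Discharging

section MaximalSplit

variable {V ι : Type*} [DecidableEq V] [DecidableEq ι] {G : SimpleGraph V} {X A : Finset V}
  {K S T : Finset ι} {c : V → ι} {i₀ u : ι} {s : ℕ} {y : V}

theorem IsSaturated.dischargingBounds (h : IsSaturated G X K s A S i₀ c)
    (hX : ¬EquitablyColorable G X K s) (hO : OreCondition G X #K)
    (hmax : ∀ A' S', IsSplit G X K s A' S' → potential G X A' S' ≤ potential G X A S)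
    (hTS : T ⊆ S) (hterm : ∀ i ∈ T, S = {i} ∨ Accessible (Movable G A c) i₀ (S.erase i))
    (hclosed : ∀ i ∈ T, ∀ j ∈ S, j ∉ T → j ≠ u → ¬Movable G A c i j) (hy : y ∈ X \ A) :
    DischargingBounds G X A c S T #(K \ S) y := by
  have hc := h.near.isColoringOn
  have hcard := card_sdiff_add_card_eq_card h.palette_subset
  have hOre {z : V} (hz : z ∈ A) (hyz : G.Adj y z) :
      degOn G X z + degOn G X y < 2 * #K ∧ degOn G (X \ A) z + degOn G A z = degOn G X z :=
    ⟨hO (h.subset hz) (mem_sdiff.1 hy).1 hyz.symm, degOn_sdiff_add_degOn h.subset z⟩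
  refine ⟨fun i hi z hz hyz => ?_, fun i hi h1 z hz hyz => ?_⟩
  · have hdeg : #(S \ insert u T) ≤ degOn G A z :=
      hc.card_le_degOn sdiff_subset fun j hj => by
        simp only [mem_sdiff, mem_insert, not_or] at hj
        have := hclosed i hi j hj.1 hj.2.2 hj.2.1
        simp only [Movable, not_exists, not_and, not_forall, not_not] at this
        simpa only [exists_prop] using this z hz
    have := card_sdiff_add_card S (insert u T)
    have := card_le_card (subset_union_left : S ⊆ S ∪ insert u T)
    have := card_insert_le u T
    have := hOre (colorClass_subset A c i hz) hyz
    lia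
  · have hsolo : ∀ w ∈ colorClass A c i, G.Adj y w → w = z := fun w hw hyw =>
      eq_of_degOn_eq_one h1 hw hyw hz hyz
    have hdeg : #(S.erase i) ≤ degOn G A z := hc.card_le_degOn (erase_subset i S) fun j hj =>
      h.exists_adj_of_solo hX (hterm i hi) hy hz hsolo hj
    have := card_erase_add_one (hTS hi)
    have := hOre (colorClass_subset A c i hz) hyz
    have := sum_degOn_swap_le h.subset (colorClass_subset A c i hz) hy hyz.symm
      (hmax _ _ (h.isSplit_swap hX (hTS hi) (hterm i hi) hy hz hsolo))
    lia

theorem IsSplit.equitablyColorable (h : IsSplit G X K s A S) (hO : OreCondition G X #K)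
    (ih : ∀ K' ⊂ K, ∀ B : Finset V, OreCondition G B #K' → #B = #K' * s →
      EquitablyColorable G B K' s) : EquitablyColorable G X K s := by
  by_contra hX
  obtain ⟨A, S, h, hmax⟩ := h.exists_maximal
  obtain ⟨i₀, c, hsat⟩ := h.exists_isSaturated hX
    (fun A' S' h' => card_le_of_potential_le (hmax A' S' h')) hO ih
  obtain ⟨T, u, hTS, hT, hterm, hclosed⟩ := hsat.near.accessible.exists_terminal
  have hle : #(X \ A) ≤ #(K \ S) * s := by
    refine card_le_of_card_le_sum_charge hT (fun i hi => ?_) fun y hy =>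
      (hsat.dischargingBounds hX hO hmax hTS hterm hclosed hy).card_le_sum_charge
        hsat.near.isColoringOn hTS h.subset hy (hsat.full y hy)
    exact (Nat.le_add_right _ _).trans (hsat.near.card_add i (hTS hi)).le
  obtain ⟨y, hy⟩ := hsat.nonempty
  rw [← (hsat.rest y hy).card_eq, ← card_erase_add_one hy] at hle
  exact Nat.not_succ_le_self _ hle

end MaximalSplit

section Induction

variable {V ι : Type*} {G : SimpleGraph V} {X : Finset V} {K : Finset ι} {c : V → ι} {s : ℕ} {x : V}

theorem IsColoringOn.of_deleteIncidenceSet [DecidableEq V]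
    (hc : IsColoringOn (G.deleteIncidenceSet x) X K c) :
    IsColoringOn G (X.erase x) K c where
  mem _ hv := hc.mem (mem_of_mem_erase hv)
  ne_of_adj _ hv _ hw hvw := hc.ne_of_adj (mem_of_mem_erase hv) (mem_of_mem_erase hw)
    (SimpleGraph.deleteIncidenceSet_adj.2 ⟨hvw, ne_of_mem_erase hv, ne_of_mem_erase hw⟩)

variable [DecidableEq ι]

theorem equitablyColorable_of_forall_not_adj [Nonempty ι]
    (hX : ∀ v ∈ X, ∀ w ∈ X, ¬G.Adj v w) (hcard : #X = #K * s) : EquitablyColorable G X K s := by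
  classical
  induction K using Finset.induction_on generalizing X with
  | empty =>
    obtain rfl : X = ∅ := by simpa using hcard
    exact ⟨fun _ => Classical.arbitrary ι, ⟨by simp, by simp⟩, by simp⟩
  | @insert l K hl ih =>
    rw [card_insert_of_notMem hl, add_one_mul] at hcard
    obtain ⟨C, hCX, rfl⟩ := exists_subset_card_eq (show s ≤ #X by lia)
    have hrest : EquitablyColorable G (X \ C) K #C :=
      ih (fun v hv w hw => hX v (mem_sdiff.1 hv).1 w (mem_sdiff.1 hw).1)
        (by rw [card_sdiff_of_subset hCX, hcard, Nat.add_sub_cancel])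
    have hC : EquitablyColorable G C {l} #C :=
      ⟨fun _ => l, ⟨fun _ _ => mem_singleton_self l, fun v hv w hw hvw =>
        absurd hvw (hX v (hCX hv) w (hCX hw))⟩, fun i hi => by
          rw [mem_singleton.1 hi, colorClass, filter_true_of_mem fun _ _ => rfl]⟩
    have h := hC.union hrest disjoint_sdiff (disjoint_singleton_left.2 hl)
    rwa [union_sdiff_of_subset hCX, ← insert_eq] at h

theorem EquitablyColorable.exists_isSplit [DecidableEq V] (hx : x ∈ X)
    (h : EquitablyColorable (G.deleteIncidenceSet x) X K s) : ∃ A S, IsSplit G X K s A S := by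
  obtain ⟨c, hc, hcard⟩ := h
  have hc' := hc.of_deleteIncidenceSet
  have hrest : (X \ colorClass (X.erase x) c (c x)).erase x =
      X.erase x \ colorClass (X.erase x) c (c x) := (erase_sdiff_comm ..).symm
  refine ⟨colorClass (X.erase x) c (c x), {c x},
    (colorClass_subset _ _ _).trans (erase_subset x X), singleton_subset_iff.2 (hc.mem hx),
    ⟨c x, c, hc'.restrict_colorClass (c x), fun i hi => ?_, .base⟩, x, ?_, c, ?_, fun i hi => ?_⟩
  · have hclass : colorClass (colorClass (X.erase x) c (c x)) c (c x) =
        colorClass (X.erase x) c (c x) := filter_true_of_mem fun v hv => (mem_colorClass.1 hv).2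
    rw [mem_singleton.1 hi, hclass, card_colorClass_erase_add hx, hcard (c x) (hc.mem hx)]
  · exact mem_sdiff.2 ⟨hx, fun h => notMem_erase x X (colorClass_subset _ _ _ h)⟩
  · rw [hrest, sdiff_singleton_eq_erase]
    exact hc'.sdiff_colorClass (c x)
  · obtain ⟨hiK, hix⟩ := mem_sdiff.1 hi
    rw [notMem_singleton] at hix
    rw [hrest, colorClass_sdiff_of_ne _ c hix, colorClass_erase_of_ne X (Ne.symm hix), hcard i hiK]

theorem OreCondition.equitablyColorable [Nonempty ι] (hO : OreCondition G X #K)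
    (hX : #X = #K * s) : EquitablyColorable G X K s := by
  classical
  induction K using Finset.strongInduction generalizing G X with
  | H K ih =>
    suffices ∀ Y ⊆ X, ∀ H ≤ G, (∀ v ∈ X, ∀ w ∈ X, H.Adj v w → v ∈ Y ∨ w ∈ Y) →
        EquitablyColorable H X K s from
      this X Subset.rfl G le_rfl fun v hv _ _ _ => .inl hv
    intro Y
    induction Y using Finset.induction_on with
    | empty =>
      intro _ H _ hcover
      exact equitablyColorable_of_forall_not_adj
        (fun v hv w hw hvw => by simpa using hcover v hv w hw hvw) hX
    | insert u Y _ ihY =>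
      intro hYX H hHG hcover
      obtain ⟨huX, hYX⟩ := insert_subset_iff.1 hYX
      have hdel : EquitablyColorable (H.deleteIncidenceSet u) X K s := by
        refine ihY hYX _ ((H.deleteIncidenceSet_le u).trans hHG) fun v hv w hw hvw => ?_
        obtain ⟨hvw, hvu, hwu⟩ := SimpleGraph.deleteIncidenceSet_adj.1 hvw
        simpa [hvu, hwu] using hcover v hv w hw hvw
      obtain ⟨A, S, hsplit⟩ := hdel.exists_isSplit huX
      exact hsplit.equitablyColorable (hO.mono_graph hHG) fun K' hK' B hB hBs => ih K' hK' hB hBs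

end Induction

section Complement

variable {V ι : Type*} [Fintype V] [DecidableEq ι] {G : SimpleGraph V} {K : Finset ι} {k r : ℕ}

theorem oreCondition_compl [DecidableRel G.Adj]
    (h : ∀ x y, x ≠ y → ¬G.Adj x y →
      2 * Fintype.card V ≤ G.degree x + G.degree y + 2 * k + 1) :
    OreCondition Gᶜ univ k := by
  intro x _ y _ hxy
  have := h x y hxy.ne ((G.compl_adj x y).1 hxy).2
  have := degOn_compl_univ_add_degree G x
  have := degOn_compl_univ_add_degree G y
  lia

theorem EquitablyColorable.exists_cliqueFactor (h : EquitablyColorable Gᶜ univ K r) :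
    ∃ 𝒯 : Finset (Finset V), (∀ S ∈ 𝒯, #S = r ∧ G.IsClique (S : Set V)) ∧
      ((𝒯 : Set (Finset V)).Pairwise fun S T => Disjoint S T) ∧ ∀ v : V, ∃ S ∈ 𝒯, v ∈ S := by
  classical
  obtain ⟨c, hc, hcard⟩ := h
  refine ⟨K.image (colorClass univ c), ?_, ?_, fun v => ?_⟩
  · refine forall_mem_image.2 fun i hi => ⟨hcard i hi, fun v hv w hw hvw => ?_⟩
    by_contra hG
    exact hc.ne_of_adj (mem_univ v) (mem_univ w) ((G.compl_adj v w).2 ⟨hvw, hG⟩)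
      ((mem_colorClass.1 hv).2.trans (mem_colorClass.1 hw).2.symm)
  · rw [coe_image]
    rintro _ ⟨i, _, rfl⟩ _ ⟨j, _, rfl⟩ hij
    exact disjoint_filter.2 fun v _ hi hj => hij (by rw [← hi, ← hj])
  · exact ⟨_, mem_image_of_mem _ (hc.mem (mem_univ v)), mem_colorClass.2 ⟨mem_univ v, rfl⟩⟩

end Complement

end KiersteadKostochka

/-- **Theorem (Kierstead–Kostochka).** If `r ∣ n` and `d(x)+d(y) ≥ 2(1-1/r)n - 1` for
all distinct nonadjacent vertices of an `n`-vertex graph `G`, then `G` has a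
`K_r`-factor: pairwise vertex-disjoint complete subgraphs on `r` vertices covering
every vertex. -/
theorem kierstead_kostochka {V : Type*} [Fintype V]
    (G : SimpleGraph V) [DecidableRel G.Adj]
    (r : ℕ) (hr : 1 ≤ r) (hdvd : r ∣ Fintype.card V)
    (hOre : ∀ x y : V, x ≠ y → ¬ G.Adj x y →
      2 * (1 - 1 / (r : ℝ)) * (Fintype.card V) - 1 ≤
        (G.degree x : ℝ) + (G.degree y : ℝ)) :
    ∃ 𝒯 : Finset (Finset V),
      (∀ S ∈ 𝒯, S.card = r ∧ G.IsClique (S : Set V)) ∧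
      ((𝒯 : Set (Finset V)).Pairwise fun S T => Disjoint S T) ∧
      ∀ v : V, ∃ S ∈ 𝒯, v ∈ S := by
  classical
  obtain ⟨k, hk⟩ := hdvd
  have hcompl : KiersteadKostochka.OreCondition Gᶜ Finset.univ k := by
    refine KiersteadKostochka.oreCondition_compl fun x y hxy hadj => ?_
    have hsum := hOre x y hxy hadj
    have hr0 : (r : ℝ) ≠ 0 := by positivity
    have hbound : 2 * (1 - 1 / (r : ℝ)) * Fintype.card V = 2 * Fintype.card V - 2 * k := by
      rw [hk]
      push_cast
      field_simp
    rw [hbound] at hsum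
    exact_mod_cast (by linarith :
      (2 * Fintype.card V : ℝ) ≤ G.degree x + G.degree y + 2 * k + 1)
  rw [← Finset.card_range k] at hcompl
  refine (hcompl.equitablyColorable (s := r) ?_).exists_cliqueFactor
  rw [Finset.card_univ, Finset.card_range, hk, mul_comm]
end
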